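/- arXiv:1408.4252 — 5 statements merged into one kernel-verified Lean document; each statement's English description precedes it below -/
import Mathlib

section
/- Fix an integer d ≥ 1 and let B = [−1/2, 1/2]^d ⊂ ℝ^d. Let L ∈ GL(d,ℝ) with operator norm ‖L‖ < 1, set J = |det L|, let H ≥ 1 be an integer, and let v₀, v₁, …, v_H ∈ B be such that each affine map L_j(z) = L·z + v_j (0 ≤ j ≤ H) sends B into the interior of B; for a word j̲ = (j₁, …, j_n) ∈ {1,…,H}^n write L_{j̲} = L_{j_n} ∘ ⋯ ∘ L_{j₁}. Assume there exist β > 1 and c ∈ (0,1) such that β^{2−c} < (J·H)² and, for every n ≥ 1 and every x ∈ ℝ^d, the number of words j̲ ∈ {1,…,H}^n with x ∈ L_{j̲}(B) is at most β^n. Then there is n₀ such that for every n ≥ n₀ the following holds, with m = ⌊c·n⌋ + 1: there exists a function w : {1,…,H}^n → B satisfying w_{j̲} = w_{j̲′} whenever the last m letters (j_{n−m+1}, …, j_n) of j̲ and j̲′ coincide, such that the family of affine contractions G_{j̲}(z) = L₀(L_{j̲}(z)) + 10·L^{n+1}(w_{j̲}), j̲ ∈ {1,…,H}^n, satisfies the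 recurrent compact condition: there is a nonempty compact set K ⊆ ⋃_{j̲} G_{j̲}(B) such that for every z ∈ K there exist z′ in the interior of K and a word j̲ with G_{j̲}(z′) = z. -/
/-!
Write `B` for the cube, and call the images of `B` under the unperturbed maps `L₀ ∘ L_j`, `j` a
word of length `n`, the pieces. Their volumes add up to about `(J H)^n` and at most `β^n` of them
overlap, so the set of points lying in at least `T ≈ (J H)^n` pieces has volume at least of order
`(J H / β)^n`. This set is the recurrent compact set `K`.

Fix `z ∈ K`. At most `β^(n-m)` pieces through `z` share a given suffix of length `m`, so the pieces
through `z` carry at least `T / β^(n-m)` distinct suffixes. If the parameter of a suffix is uniform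
in `B`, the preimage `G_j⁻¹(z) = y - 10 w`, where `y ∈ B`, is uniform in a set containing `B`, hence
falls into a prescribed subset of `B` of volume of order `(J H / β)^n` with probability of that
order. The parameters of different suffixes are independent, so `z` has no preimage in that subset
with probability at most `exp (-c₀ θ^n)`, where `θ = (J H)^2 / β^(2-c) > 1`.

This beats the exponential cardinality of a net of `K` modulo `(L^(n+1))² (B / 4)`, so some choice
of parameters works for all points of the net at once. To pass from the net to `K`, the preimages of
net points are required to lie in at least `T` of the pieces shrunk by one half: moving such a
preimage by `L^(n+1) (B / 4)` does not leave the interior of `K`.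
-/

open MeasureTheory

/-- The closed cube `[−1/2,1/2]^d` in `ℝ^d`. -/
def unitCube (d : ℕ) : Set (EuclideanSpace ℝ (Fin d)) :=
  {x | ∀ i, |x i| ≤ 1 / 2}

/-- `wordMap L v n w` is the composition `L_{w n} ∘ ⋯ ∘ L_{w 1}` of the affine contractions
`L_j z = L z + v j` along the word `w = (w 1, …, w n)` (first letter applied first). -/
noncomputable def wordMap {d H : ℕ}
    (L : EuclideanSpace ℝ (Fin d) →L[ℝ] EuclideanSpace ℝ (Fin d))
    (v : Fin H → EuclideanSpace ℝ (Fin d)) :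
    (n : ℕ) → (Fin n → Fin H) → EuclideanSpace ℝ (Fin d) → EuclideanSpace ℝ (Fin d)
  | 0, _, z => z
  | n + 1, w, z => L (wordMap L v n (fun i => w i.castSucc) z) + v (w (Fin.last n))

open Set Filter ProbabilityTheory
open scoped Pointwise Topology

section CoveredAtLeast

variable {ι X : Type*}

/-- The points lying in at least `T` sets of the family `f`; the recurrent compact set is of this
form. The threshold is real because it is given by a ratio of volumes. -/
def coveredAtLeast (f : ι → Set X) (T : ℝ) : Set X :=
  {x | T ≤ ({j | x ∈ f j}.ncard : ℝ)}

lemma exists_mem_of_mem_coveredAtLeast {f : ι → Set X} {T : ℝ} (hT : 0 < T) {x : X}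
    (hx : x ∈ coveredAtLeast f T) : ∃ j, x ∈ f j :=
  nonempty_of_ncard_ne_zero fun h => (hT.trans_le hx).ne' (by exact_mod_cast h)

lemma coveredAtLeast_subset {f : ι → Set X} {T : ℝ} (hT : 0 < T) {B : Set X}
    (hf : ∀ j, f j ⊆ B) : coveredAtLeast f T ⊆ B := fun _ hx =>
  let ⟨j, hj⟩ := exists_mem_of_mem_coveredAtLeast hT hx
  hf j hj

lemma ncard_setOf_mem_eq_sum_indicator [Fintype ι] (f : ι → Set X) (x : X) :
    ({j | x ∈ f j}.ncard : ℝ) = ∑ j, (f j).indicator 1 x := by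
  classical
  simp [indicator_apply, ncard_eq_toFinset_card']

section Finite

variable [Finite ι]

lemma mem_coveredAtLeast_of_imp {f g : ι → Set X} {T : ℝ} {x y : X}
    (hx : x ∈ coveredAtLeast f T) (h : ∀ j, x ∈ f j → y ∈ g j) : y ∈ coveredAtLeast g T :=
  le_trans (mem_ofPred.1 hx) (by exact_mod_cast ncard_le_ncard fun j hj => h j hj)

lemma coveredAtLeast_mono {f g : ι → Set X} (h : ∀ j, f j ⊆ g j) (T : ℝ) :
    coveredAtLeast f T ⊆ coveredAtLeast g T := fun _ hx =>
  mem_coveredAtLeast_of_imp hx fun j hj => h j hj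

lemma coveredAtLeast_eq_biUnion (f : ι → Set X) (T : ℝ) :
    coveredAtLeast f T = ⋃ F ∈ {F : Set ι | T ≤ F.ncard}, ⋂ j ∈ F, f j := by
  ext x
  simp only [mem_iUnion, mem_iInter, mem_ofPred, exists_prop]
  refine ⟨fun hx => ⟨{j | x ∈ f j}, hx, fun _ hj => hj⟩, fun ⟨F, hF, hx⟩ => hF.trans ?_⟩
  exact_mod_cast ncard_le_ncard fun j hj => hx j hj

lemma isClosed_coveredAtLeast [TopologicalSpace X] {f : ι → Set X} (hf : ∀ j, IsClosed (f j))
    (T : ℝ) : IsClosed (coveredAtLeast f T) := by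
  rw [coveredAtLeast_eq_biUnion]
  exact (toFinite _).isClosed_biUnion fun F _ => isClosed_biInter fun j _ => hf j

lemma measurableSet_coveredAtLeast [MeasurableSpace X] {f : ι → Set X}
    (hf : ∀ j, MeasurableSet (f j)) (T : ℝ) : MeasurableSet (coveredAtLeast f T) := by
  rw [coveredAtLeast_eq_biUnion]
  exact .biUnion (to_countable _) fun F _ => .biInter (to_countable _) fun j _ => hf j

end Finite

/-- A reverse Markov inequality: the multiplicity is at most `T` off `coveredAtLeast f T` and at
most `M` on it. -/
lemma sum_measureReal_le_coveredAtLeast [Fintype ι] [MeasurableSpace X]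
    (ν : Measure X) [IsFiniteMeasure ν] {f : ι → Set X} (hf : ∀ j, MeasurableSet (f j)) {T M : ℝ}
    (hT : 0 ≤ T) (hM : ∀ x, ({j | x ∈ f j}.ncard : ℝ) ≤ M) :
    ∑ j, ν.real (f j) ≤ T * ν.real univ + M * ν.real (coveredAtLeast f T) := by
  have hU := measurableSet_coveredAtLeast hf T
  have hint : ∀ j, Integrable ((f j).indicator (1 : X → ℝ)) ν := fun j =>
    (integrable_const 1).indicator (hf j)
  have hintU : Integrable ((coveredAtLeast f T).indicator fun _ => M) ν :=
    (integrable_const M).indicator hU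
  calc ∑ j, ν.real (f j)
      = ∫ x, ({j | x ∈ f j}.ncard : ℝ) ∂ν := by
        simp only [ncard_setOf_mem_eq_sum_indicator, integral_finsetSum _ fun j _ => hint j,
          integral_indicator_one (hf _)]
    _ ≤ ∫ x, (T + (coveredAtLeast f T).indicator (fun _ => M) x) ∂ν := by
        refine integral_mono ?_ ((integrable_const T).add hintU) fun x => ?_
        · simp only [ncard_setOf_mem_eq_sum_indicator]
          exact integrable_finsetSum _ fun j _ => hint j
        · by_cases hx : x ∈ coveredAtLeast f T
          · simpa only [indicator_of_mem hx] using (hM x).trans (le_add_of_nonneg_left hT)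
          · simpa only [indicator_of_notMem hx, add_zero] using (not_le.1 hx).le
    _ = T * ν.real univ + M * ν.real (coveredAtLeast f T) := by
        rw [integral_add (integrable_const T) hintU, integral_const, integral_indicator_const M hU]
        simp only [smul_eq_mul, mul_comm]

end CoveredAtLeast

section Selection

lemma ncard_le_mul_ncard_image {ι S : Type*} {F : Set ι} (hF : F.Finite) (σ : ι → S) {b : ℝ}
    (hb : ∀ i, ({j ∈ F | σ j = σ i}.ncard : ℝ) ≤ b) :
    (F.ncard : ℝ) ≤ b * (σ '' F).ncard := by
  classical
  lift F to Finset ι using hF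
  rw [← Finset.coe_image, ncard_coe_finset, ncard_coe_finset, Finset.card_eq_sum_card_image σ F,
    Nat.cast_sum, mul_comm, ← nsmul_eq_mul]
  refine Finset.sum_le_card_nsmul _ _ _ (Finset.forall_mem_image.2 fun i _ => ?_)
  simpa only [← Finset.coe_filter, ncard_coe_finset, Finset.mem_coe] using hb i

variable {Ω S : Type*} [MeasurableSpace Ω] (μ : Measure Ω) [IsProbabilityMeasure μ]

lemma measureReal_pi_compl_le_exp [Fintype S] (F : Set S) {good : S → Set Ω} {p : ℝ}
    (hmeas : ∀ s ∈ F, MeasurableSet (good s)) (hp : ∀ s ∈ F, p ≤ μ.real (good s)) :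
    (Measure.pi fun _ : S => μ).real (F.pi fun s => (good s)ᶜ) ≤ Real.exp (-(p * F.ncard)) := by
  classical
  lift F to Finset S using F.toFinite
  rw [measureReal_def, Measure.pi_pi_finset, ENNReal.toReal_prod, ncard_coe_finset]
  calc ∏ s ∈ F, μ.real (good s)ᶜ
      ≤ ∏ _s ∈ F, Real.exp (-p) := by
        refine Finset.prod_le_prod (fun _ _ => measureReal_nonneg) fun s hs => ?_
        rw [probReal_compl_eq_one_sub (hmeas s hs)]
        exact (sub_le_sub_left (hp s hs) 1).trans (Real.one_sub_le_exp_neg p)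
    _ = Real.exp (-(p * F.card)) := by
        rw [Finset.prod_const, ← Real.exp_nat_mul]
        ring_nf

/-- The first moment method: if the values `w s` are drawn independently from `μ`, a given `z`
misses all its good sets with probability at most `exp (-Q)`. -/
lemma exists_forall_exists_mem_good {ζ : Type*} [Finite S] {B : Set Ω} (hB : ∀ᵐ x ∂μ, x ∈ B)
    (Z : Finset ζ) (label : ζ → Set S) (good : ζ → S → Set Ω) {p Q : ℝ}
    (hmeas : ∀ z ∈ Z, ∀ s ∈ label z, MeasurableSet (good z s))
    (hp : ∀ z ∈ Z, ∀ s ∈ label z, p ≤ μ.real (good z s))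
    (hQ : ∀ z ∈ Z, Q ≤ p * (label z).ncard) (hZ : Z.card * Real.exp (-Q) < 1) :
    ∃ w : S → Ω, (∀ s, w s ∈ B) ∧ ∀ z ∈ Z, ∃ s ∈ label z, w s ∈ good z s := by
  have := Fintype.ofFinite S
  let P : Measure (S → Ω) := Measure.pi fun _ => μ
  let bad : ζ → Set (S → Ω) := fun z => (label z).pi fun s => (good z s)ᶜ
  have hbad : P.real (⋃ z ∈ Z, bad z) < 1 :=
    calc P.real (⋃ z ∈ Z, bad z) ≤ ∑ z ∈ Z, P.real (bad z) := measureReal_biUnion_finset_le _ _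
      _ ≤ ∑ _z ∈ Z, Real.exp (-Q) := Finset.sum_le_sum fun z hz =>
        (measureReal_pi_compl_le_exp μ _ (hmeas z hz) (hp z hz)).trans <|
          Real.exp_le_exp.2 (neg_le_neg (hQ z hz))
      _ < 1 := by rwa [Finset.sum_const, nsmul_eq_mul]
  have hmem : ∀ᵐ w ∂P, ∀ s, w s ∈ B :=
    eventually_all.2 fun s => Measure.tendsto_eval_ae_ae.eventually hB
  have hgood : ∃ᵐ w ∂P, w ∉ ⋃ z ∈ Z, bad z := fun h => by
    have : P.real (⋃ z ∈ Z, bad z) = P.real univ :=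
      measureReal_congr (by filter_upwards [h] with w hw; exact eq_true (not_not.1 hw))
    rw [this, probReal_univ] at hbad
    exact lt_irrefl 1 hbad
  obtain ⟨w, hw, hwB⟩ := (hgood.and_eventually hmem).exists
  refine ⟨w, hwB, fun z hz => ?_⟩
  by_contra! h
  exact hw (mem_biUnion hz h)

end Selection

section Covering

variable {G : Type*} [AddGroup G] [MeasurableSpace G] [MeasurableAdd G] (μ : Measure G)
  [μ.IsAddLeftInvariant] {K W : Set G}

lemma card_mul_measureReal_le_of_pairwiseDisjoint_vadd (hW : MeasurableSet W)
    (hKW : μ (K + W) ≠ ⊤) {Z : Finset G} (hZK : (Z : Set G) ⊆ K)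
    (hZ : (Z : Set G).PairwiseDisjoint fun z => z +ᵥ W) :
    Z.card * μ.real W ≤ μ.real (K + W) := by
  calc Z.card * μ.real W = ∑ z ∈ Z, μ.real (z +ᵥ W) := by
        simp only [measureReal_def, measure_vadd, Finset.sum_const, nsmul_eq_mul]
    _ = μ.real (⋃ z ∈ Z, z +ᵥ W) :=
        (measureReal_biUnion_finset hZ (fun z _ => hW.const_vadd z) fun z hz =>
          ne_top_of_le_ne_top hKW <| measure_mono (vadd_set_subset_add (hZK hz))).symm
    _ ≤ μ.real (K + W) :=
        measureReal_mono (iUnion₂_subset fun z hz => vadd_set_subset_add (hZK hz)) hKW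

/-- Ruzsa's covering lemma for an invariant measure: the centres are those of a maximal family of
disjoint translates of `W`. -/
theorem exists_finset_subset_add_sub_of_measureReal_add_le (hW : MeasurableSet W)
    (hW0 : 0 < μ.real W) (hKW : μ (K + W) ≠ ⊤) {N : ℝ} (hN : μ.real (K + W) ≤ N * μ.real W) :
    ∃ Z : Finset G, (Z : Set G) ⊆ K ∧ Z.card ≤ N ∧ K ⊆ Z + (W - W) := by
  classical
  let IsPacking : Finset G → Prop := fun Z =>
    (Z : Set G) ⊆ K ∧ (Z : Set G).PairwiseDisjoint fun z => z +ᵥ W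
  have hcard : ∀ Z, IsPacking Z → (Z.card : ℝ) ≤ N := fun Z ⟨hZK, hZ⟩ =>
    le_of_mul_le_mul_right
      ((card_mul_measureReal_le_of_pairwiseDisjoint_vadd μ hW hKW hZK hZ).trans hN) hW0
  have hbdd : BddAbove (Finset.card '' {Z | IsPacking Z}) :=
    ⟨⌊N⌋₊, forall_mem_image.2 fun Z hZ => Nat.le_floor (hcard Z hZ)⟩
  obtain ⟨Z, hZ, hmax⟩ : ∃ Z, IsPacking Z ∧ ∀ Z', IsPacking Z' → Z'.card ≤ Z.card := by
    obtain ⟨Z, hZ, hcardZ⟩ := Nat.sSup_mem (Nonempty.image _ ⟨∅, by simp [IsPacking]⟩) hbdd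
    exact ⟨Z, hZ, fun Z' hZ' => hcardZ ▸ le_csSup hbdd (mem_image_of_mem _ hZ')⟩
  refine ⟨Z, hZ.1, hcard Z hZ, fun x hx => ?_⟩
  by_contra hxZ
  have hdisj : ∀ z ∈ Z, Disjoint (x +ᵥ W) (z +ᵥ W) := fun z hz => by
    refine disjoint_left.2 ?_
    rintro _ ⟨w, hw, rfl⟩ ⟨w', hw', h⟩
    refine hxZ ⟨z, hz, w' - w, sub_mem_sub hw' hw, ?_⟩
    simp only [vadd_eq_add] at h
    simp only [← add_sub_assoc, h, add_sub_cancel_right]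
  have hx_notMem : x ∉ Z := fun hxZ' =>
    have ⟨w, hw⟩ : W.Nonempty := nonempty_of_measureReal_ne_zero hW0.ne'
    hxZ ⟨x, hxZ', w - w, sub_mem_sub hw hw, by simp⟩
  have hinsert : IsPacking (insert x Z) := by
    simp only [IsPacking, Finset.coe_insert, insert_subset_iff, hx, hZ.1, and_self, true_and]
    exact hZ.2.insert fun z hz _ => hdisj z hz
  have := hmax _ hinsert
  rw [Finset.card_insert_of_notMem hx_notMem] at this
  exact (Nat.lt_succ_self _).not_ge this

end Covering

section AbsConvexSets

variable {E : Type*} [AddCommGroup E] [Module ℝ E] {B : Set E}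

lemma smul_add_smul_mem_of_absConvex (hB : AbsConvex ℝ B) {s t : ℝ} (hst : |s| + |t| ≤ 1) {x y : E}
    (hx : x ∈ B) (hy : y ∈ B) : s • x + t • y ∈ B := by
  have hsum : |s| • B + |t| • B ⊆ B := by
    rw [← hB.2.add_smul (abs_nonneg s) (abs_nonneg t)]
    exact hB.1 _ (by simpa only [Real.norm_eq_abs, abs_of_nonneg (by positivity : 0 ≤ |s| + |t|)])
  rw [← hB.1.smul_congr (a := s) (b := |s|) (by simp),
    ← hB.1.smul_congr (a := t) (b := |t|) (by simp)] at hsum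
  exact hsum (add_mem_add (smul_mem_smul_set hx) (smul_mem_smul_set hy))

lemma preimage_sub_smul_subset_of_absConvex (hB : AbsConvex ℝ B) {U : Set E} (hU : U ⊆ B) {y : E}
    (hy : y ∈ B) {r : ℝ} (hr : 2 ≤ r) : (fun w => y - r • w) ⁻¹' U ⊆ B := by
  intro w hw
  have hr0 : (0 : ℝ) < r := two_pos.trans_le hr
  have hw_eq : w = r⁻¹ • y + (-r⁻¹) • (y - r • w) := by
    simp only [smul_sub, neg_smul, inv_smul_smul₀ hr0.ne']
    abel
  rw [hw_eq]
  refine smul_add_smul_mem_of_absConvex hB ?_ hy (hU hw)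
  rw [abs_neg, abs_of_pos (inv_pos.2 hr0)]
  linarith [inv_anti₀ two_pos hr]

lemma mapsTo_of_mapsTo_add_const (hB : AbsConvex ℝ B) (A : E →ₗ[ℝ] E) {a : E}
    (h : MapsTo (fun z => A z + a) B B) : MapsTo A B B := by
  intro z hz
  have hAz : A z = (1 / 2 : ℝ) • (A z + a) + (-(1 / 2) : ℝ) • (A (-z) + a) := by
    rw [map_neg]
    module
  rw [hAz]
  exact smul_add_smul_mem_of_absConvex hB (by norm_num) (h hz) (h (hB.1.neg_mem_iff.2 hz))

end AbsConvexSets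

section Volume

variable {E : Type*} [NormedAddCommGroup E] [NormedSpace ℝ E] [FiniteDimensional ℝ E]
  [MeasurableSpace E] [BorelSpace E]

lemma measureReal_smul_of_nonneg (μ : Measure E) [μ.IsAddHaarMeasure] {r : ℝ} (hr : 0 ≤ r)
    (S : Set E) : μ.real (r • S) = r ^ Module.finrank ℝ E * μ.real S := by
  rw [measureReal_def, Measure.addHaar_smul_of_nonneg μ hr, ENNReal.toReal_mul,
    ENNReal.toReal_ofReal (by positivity), measureReal_def]

lemma measureReal_image_continuousLinearMap (μ : Measure E) [μ.IsAddHaarMeasure] (A : E →L[ℝ] E)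
    (S : Set E) : μ.real (A '' S) = |A.det| * μ.real S := by
  rw [measureReal_def, Measure.addHaar_image_continuousLinearMap, ENNReal.toReal_mul,
    ENNReal.toReal_ofReal (abs_nonneg _), measureReal_def, ContinuousLinearMap.det]

lemma measureReal_preimage_sub_smul (μ : Measure E) [μ.IsAddHaarMeasure] (y : E) {r : ℝ}
    (hr : 0 < r) (S : Set E) :
    μ.real ((fun w => y - r • w) ⁻¹' S) = (r ^ Module.finrank ℝ E)⁻¹ * μ.real S := by
  have hcomp : (fun w => y - r • w) ⁻¹' S = (r • ·) ⁻¹' ((y - ·) ⁻¹' S) := rfl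
  have hsub : μ ((y - ·) ⁻¹' S) = μ S :=
    (Measure.measurePreserving_sub_left μ y).measure_preimage_emb
      (Homeomorph.subLeft y).measurableEmbedding S
  rw [hcomp, measureReal_def, Measure.addHaar_preimage_smul μ hr.ne', hsub, ENNReal.toReal_mul,
    ENNReal.toReal_ofReal (abs_nonneg _), abs_of_pos (by positivity), measureReal_def]

end Volume

lemma exists_finset_net_of_absConvex {E : Type*} [NormedAddCommGroup E] [NormedSpace ℝ E]
    [FiniteDimensional ℝ E] {B K : Set E} (hB : AbsConvex ℝ B) (hBc : IsCompact B)
    (hB0 : B ∈ 𝓝 0) (hK : K ⊆ B) {A : E →L[ℝ] E} (hA : A.det ≠ 0) (hAB : MapsTo A B B) {r : ℝ}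
    (hr : 0 < r) (hr1 : r ≤ 1) :
    ∃ Z : Finset E, (Z : Set E) ⊆ K ∧ Z.card ≤ (4 / r) ^ Module.finrank ℝ E / |A.det| ∧
      K ⊆ Z + A '' (r • B) := by
  borelize E
  let μ : Measure E := Measure.addHaar
  let W : Set E := A '' ((r / 2) • B)
  have hμB : 0 < μ.real B := ENNReal.toReal_pos (Measure.measure_pos_of_mem_nhds μ hB0).ne'
    hBc.measure_ne_top
  have hμW : μ.real W = |A.det| * ((r / 2) ^ Module.finrank ℝ E * μ.real B) := by
    rw [measureReal_image_continuousLinearMap, measureReal_smul_of_nonneg μ (by positivity)]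
  have hKW : K + W ⊆ (2 : ℝ) • B := by
    have hW : W ⊆ B := image_subset_iff.2 fun b hb =>
      hAB (hB.1 _ (by rw [Real.norm_of_nonneg] <;> linarith) hb)
    rw [← one_add_one_eq_two, hB.2.add_smul zero_le_one zero_le_one, one_smul]
    exact add_subset_add hK hW
  have hWW : W - W ⊆ A '' (r • B) := by
    have hr2 : 0 ≤ r / 2 := by positivity
    rw [← image_sub, sub_eq_add_neg, (hB.1.smul _).neg_eq, ← hB.2.add_smul hr2 hr2, add_halves]
  obtain ⟨Z, hZK, hZ, hZW⟩ := exists_finset_subset_add_sub_of_measureReal_add_le (μ := μ)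
    (K := K) (W := W) (N := (4 / r) ^ Module.finrank ℝ E / |A.det|)
    ((hBc.smul (r / 2)).image A.continuous).measurableSet (by rw [hμW]; positivity)
    (ne_top_of_le_ne_top (hBc.smul 2).measure_ne_top (measure_mono hKW)) <|
      calc μ.real (K + W) ≤ μ.real ((2 : ℝ) • B) :=
            measureReal_mono hKW (hBc.smul 2).measure_ne_top
        _ = (4 / r) ^ Module.finrank ℝ E / |A.det| * μ.real W := by
            have hpow : (2 : ℝ) ^ Module.finrank ℝ E = (4 / r) ^ Module.finrank ℝ E *
                (r / 2) ^ Module.finrank ℝ E := by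
              rw [← mul_pow, div_mul_div_cancel₀ hr.ne']
              norm_num
            rw [hμW, measureReal_smul_of_nonneg μ zero_le_two, hpow]
            field_simp
  exact ⟨Z, hZK, hZ, hZW.trans (add_subset_add_left hWW)⟩

lemma exists_finset_net_apply_apply {E : Type*} [NormedAddCommGroup E] [NormedSpace ℝ E]
    [FiniteDimensional ℝ E] {B K : Set E} (hB : AbsConvex ℝ B) (hBc : IsCompact B) (hB0 : B ∈ 𝓝 0)
    (hK : K ⊆ B) (A : E ≃L[ℝ] E) (hAB : MapsTo A B B) :
    ∃ Z : Finset E, (Z : Set E) ⊆ K ∧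
      Z.card ≤ 16 ^ Module.finrank ℝ E / (A : E →L[ℝ] E).det ^ 2 ∧
      ∀ z ∈ K, ∃ z₁ ∈ Z, ∃ b ∈ (1 / 4 : ℝ) • B, z₁ + A (A b) = z := by
  have hdet : ((A : E →L[ℝ] E) * A).det = (A : E →L[ℝ] E).det ^ 2 :=
    (map_mul LinearMap.det _ _).trans (sq _).symm
  have hdet0 : ((A : E →L[ℝ] E) * A).det ≠ 0 :=
    hdet ▸ pow_ne_zero 2 A.toLinearEquiv.isUnit_det'.ne_zero
  obtain ⟨Z, hZK, hZ, hKZ⟩ := exists_finset_net_of_absConvex hB hBc hB0 hK hdet0 (hAB.comp hAB)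
    (r := 1 / 4) (by norm_num) (by norm_num)
  refine ⟨Z, hZK, ?_, fun z hz => ?_⟩
  · rwa [hdet, abs_sq, show (4 : ℝ) / (1 / 4) = 16 by norm_num] at hZ
  · obtain ⟨z₁, hz₁, _, ⟨b, hb, rfl⟩, rfl⟩ := hKZ hz
    exact ⟨z₁, hz₁, b, hb, rfl⟩

section AffinePieces

variable {ι E : Type*}

/-- The images of `S` under the affine maps `z ↦ A z + a j` with common linear part `A`. -/
def affinePieces [Add E] (A : E → E) (a : ι → E) (S : Set E) (j : ι) : Set E :=
  (fun z => A z + a j) '' S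

lemma affinePieces_mono [Add E] (A : E → E) (a : ι → E) {S S' : Set E} (h : S ⊆ S') (j : ι) :
    affinePieces A a S j ⊆ affinePieces A a S' j :=
  image_mono h

variable [NormedAddCommGroup E] [NormedSpace ℝ E] {B : Set E}

lemma mem_affinePieces {A : E ≃L[ℝ] E} {a : ι → E} {S : Set E} {j : ι} {x : E} :
    x ∈ affinePieces A a S j ↔ A.symm (x - a j) ∈ S := by
  refine ⟨?_, fun h => ⟨_, h, by simp⟩⟩
  rintro ⟨z, hz, rfl⟩
  simpa

lemma isCompact_affinePieces (A : E →L[ℝ] E) (a : ι → E) {S : Set E} (hS : IsCompact S) (j : ι) :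
    IsCompact (affinePieces A a S j) :=
  hS.image (by fun_prop)

lemma measureReal_affinePieces [FiniteDimensional ℝ E] [MeasurableSpace E] [BorelSpace E]
    (μ : Measure E) [μ.IsAddHaarMeasure] (A : E →L[ℝ] E) (a : ι → E) (S : Set E) (j : ι) :
    μ.real (affinePieces A a S j) = |A.det| * μ.real S := by
  rw [affinePieces, ← image_image (· + a j) A, image_add_right, measureReal_def,
    measure_preimage_add_right, ← measureReal_def, measureReal_image_continuousLinearMap]

lemma smul_mem_nhds_of_mem_smul (hB : Convex ℝ B) (hB0 : B ∈ 𝓝 0) {s t : ℝ} (hs : 0 ≤ s)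
    (hst : s < t) {b : E} (hb : b ∈ s • B) : t • B ∈ 𝓝 b := by
  have hnhds : b +ᵥ (t - s) • B ∈ 𝓝 b := by
    simpa using vadd_mem_nhds_vadd b ((set_smul_mem_nhds_zero_iff (sub_pos.2 hst).ne').2 hB0)
  refine mem_of_superset hnhds ?_
  rw [← add_sub_cancel s t, hB.add_smul hs (sub_pos.2 hst).le, add_sub_cancel_left]
  exact vadd_set_subset_add hb

/-- Shrinking the pieces by one half leaves room for a perturbation. -/
lemma add_apply_mem_interior_coveredAtLeast [Finite ι] (hB : Convex ℝ B) (hB0 : B ∈ 𝓝 0)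
    {A : E ≃L[ℝ] E} {a : ι → E} {T : ℝ} {u b : E}
    (hu : u ∈ coveredAtLeast (affinePieces A a ((1 / 2 : ℝ) • B)) T) (hb : b ∈ (1 / 4 : ℝ) • B) :
    u + A b ∈ interior (coveredAtLeast (affinePieces A a B) T) := by
  have hnhds : (1 / 2 : ℝ) • B ∈ 𝓝 (A.symm (u + A b - u)) := by
    rw [add_sub_cancel_left, A.symm_apply_apply]
    exact smul_mem_nhds_of_mem_smul hB hB0 (by norm_num) (by norm_num) hb
  have hcont : Continuous fun y => A.symm (y - u) := by fun_prop
  refine mem_interior_iff_mem_nhds.2 ?_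
  filter_upwards [hcont.continuousAt.preimage_mem_nhds hnhds] with y hy
  refine mem_coveredAtLeast_of_imp hu fun j hj => mem_affinePieces.2 ?_
  have hsum := add_mem_add (mem_affinePieces.1 hj) (mem_preimage.1 hy)
  rwa [← hB.add_smul (by norm_num) (by norm_num), add_halves, one_smul, ← map_add, add_comm,
    sub_add_sub_cancel] at hsum

end AffinePieces

section UniformMeasure

lemma measureReal_cond_of_subset {Ω : Type*} [MeasurableSpace Ω] (μ : Measure Ω) {B S : Set Ω}
    (hB : MeasurableSet B) (hS : S ⊆ B) : μ[|B].real S = (μ.real B)⁻¹ * μ.real S := by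
  rw [measureReal_def, cond_apply hB, inter_eq_right.2 hS, ENNReal.toReal_mul, ENNReal.toReal_inv,
    measureReal_def, measureReal_def]

variable {ι E : Type*} [NormedAddCommGroup E] [NormedSpace ℝ E] [FiniteDimensional ℝ E]
  [MeasurableSpace E] [BorelSpace E] (μ : Measure E) [μ.IsAddHaarMeasure] {B : Set E}

lemma le_measureReal_cond_coveredAtLeast [Fintype ι] (hB : Balanced ℝ B) (hBc : IsCompact B)
    (hB0 : B ∈ 𝓝 0) {A : E →L[ℝ] E} {a : ι → E} (hmaps : ∀ j, MapsTo (fun z => A z + a j) B B)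
    {T M : ℝ} (hT : 0 ≤ T)
    (hTcard : 2 * T ≤ Fintype.card ι * (|A.det| * (1 / 2) ^ Module.finrank ℝ E)) (hM0 : 0 < M)
    (hM : ∀ x, ({j | x ∈ affinePieces A a B j}.ncard : ℝ) ≤ M) :
    T / M ≤ μ[|B].real (coveredAtLeast (affinePieces A a ((1 / 2 : ℝ) • B)) T) := by
  have hμB : μ B ≠ 0 := (Measure.measure_pos_of_mem_nhds μ hB0).ne'
  have : IsProbabilityMeasure μ[|B] := cond_isProbabilityMeasure_of_finite hμB hBc.measure_ne_top
  have hhalf : (1 / 2 : ℝ) • B ⊆ B := hB _ (by norm_num)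
  have hpiece : ∀ j, μ[|B].real (affinePieces A a ((1 / 2 : ℝ) • B) j) =
      |A.det| * (1 / 2) ^ Module.finrank ℝ E := fun j => by
    rw [measureReal_cond_of_subset μ hBc.measurableSet
      ((affinePieces_mono A a hhalf j).trans (hmaps j).image_subset), measureReal_affinePieces,
      measureReal_smul_of_nonneg μ (by norm_num)]
    have : μ.real B ≠ 0 := ENNReal.toReal_ne_zero.2 ⟨hμB, hBc.measure_ne_top⟩
    field_simp
  have hsum := sum_measureReal_le_coveredAtLeast μ[|B]
    (fun j => (isCompact_affinePieces A a (hBc.smul (1 / 2 : ℝ)) j).measurableSet) hT (M := M)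
    fun x => (hM x).trans' <| by
      exact_mod_cast ncard_le_ncard fun j hj => affinePieces_mono A a hhalf j hj
  simp only [hpiece, Finset.sum_const, Finset.card_univ, nsmul_eq_mul, probReal_univ] at hsum
  rw [div_le_iff₀' hM0]
  linarith

lemma measureReal_cond_preimage_sub_smul (hB : AbsConvex ℝ B) (hBm : MeasurableSet B) {U : Set E}
    (hU : U ⊆ B) {y : E} (hy : y ∈ B) {r : ℝ} (hr : 2 ≤ r) :
    μ[|B].real ((fun w => y - r • w) ⁻¹' U) =
      (r ^ Module.finrank ℝ E)⁻¹ * μ[|B].real U := by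
  rw [measureReal_cond_of_subset μ hBm (preimage_sub_smul_subset_of_absConvex hB hU hy hr),
    measureReal_cond_of_subset μ hBm hU, measureReal_preimage_sub_smul μ y (two_pos.trans_le hr),
    mul_left_comm]

end UniformMeasure

section RecurrentCompact

/-- The recurrent compact condition for the iterated function system `G` on `B`, witnessed by
`K`: every point of `K` has a preimage under some map of the system in the interior of `K`. -/
def IsRecurrentCompact {ι X : Type*} [TopologicalSpace X] (G : ι → X → X) (B K : Set X) : Prop :=
  K.Nonempty ∧ IsCompact K ∧ K ⊆ ⋃ j, G j '' B ∧ ∀ z ∈ K, ∃ z' ∈ interior K, ∃ j, G j z' = z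

lemma isRecurrentCompact_of_subset {ι X : Type*} [TopologicalSpace X] {G : ι → X → X} {B K : Set X}
    (hK0 : K.Nonempty) (hKc : IsCompact K) (hKB : K ⊆ B)
    (hG : ∀ z ∈ K, ∃ z' ∈ interior K, ∃ j, G j z' = z) : IsRecurrentCompact G B K :=
  ⟨hK0, hKc, fun z hz =>
    let ⟨z', hz', j, hj⟩ := hG z hz
    mem_iUnion.2 ⟨j, z', hKB (interior_subset hz'), hj⟩, hG⟩

variable {ι S E : Type*} [NormedAddCommGroup E] [NormedSpace ℝ E] [FiniteDimensional ℝ E]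
  {B : Set E} {A : E ≃L[ℝ] E} {a : ι → E} {σ : ι → S} {T b r : ℝ}

lemma exists_parameters_forall_exists_sub_smul_mem [Finite ι] [Finite S] [MeasurableSpace E]
    [BorelSpace E] (μ : Measure E) [μ.IsAddHaarMeasure] (hB : AbsConvex ℝ B) (hBc : IsCompact B)
    (hB0 : B ∈ 𝓝 0) {U : Set E} (hUm : MeasurableSet U) (hU : U ⊆ B) {Z : Finset E}
    (hZ : (Z : Set E) ⊆ coveredAtLeast (affinePieces A a B) T) (hb0 : 0 < b)
    (hb : ∀ x i, ({j ∈ {j | x ∈ affinePieces A a B j} | σ j = σ i}.ncard : ℝ) ≤ b) (hr : 2 ≤ r)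
    {p : ℝ} (hp0 : 0 ≤ p) (hp : p ≤ (r ^ Module.finrank ℝ E)⁻¹ * μ[|B].real U)
    (hcard : Z.card * Real.exp (-(p * (T / b))) < 1) :
    ∃ w : S → E, (∀ s, w s ∈ B) ∧ ∀ z ∈ Z, ∃ j, A.symm (z - a j) - r • w (σ j) ∈ U := by
  have : IsProbabilityMeasure μ[|B] := cond_isProbabilityMeasure_of_finite
    (Measure.measure_pos_of_mem_nhds μ hB0).ne' hBc.measure_ne_top
  let preimages : E → ι → Set E := fun z j => (fun w => A.symm (z - a j) - r • w) ⁻¹' U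
  have hpreim : ∀ z, ∀ j ∈ {j | z ∈ affinePieces A a B j}, p ≤ μ[|B].real (preimages z j) := by
    intro z j hj
    refine hp.trans_eq (Eq.symm ?_)
    exact measureReal_cond_preimage_sub_smul μ hB hBc.measurableSet hU (mem_affinePieces.1 hj) hr
  obtain ⟨w, hwB, hw⟩ : ∃ w : S → E, (∀ s, w s ∈ B) ∧
      ∀ z ∈ Z, ∃ s ∈ σ '' {j | z ∈ affinePieces A a B j},
        w s ∈ ⋃ j ∈ {j ∈ {j | z ∈ affinePieces A a B j} | σ j = s}, preimages z j := by
    refine exists_forall_exists_mem_good μ[|B] (ae_cond_mem hBc.measurableSet) Z _ _ (p := p)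
      (Q := p * (T / b)) (fun z _ s _ => ?_) ?_ (fun z hz => ?_) hcard
    · exact .biUnion (to_countable _) fun j _ => hUm.preimage (by fun_prop)
    · rintro z - _ ⟨j, hj, rfl⟩
      refine (hpreim z j hj).trans (measureReal_mono ?_ (measure_ne_top _ _))
      exact subset_biUnion_of_mem (s := {i ∈ {i | z ∈ affinePieces A a B i} | σ i = σ j}) ⟨hj, rfl⟩
    · refine mul_le_mul_of_nonneg_left ((div_le_iff₀' hb0).2 ?_) hp0
      exact le_trans (mem_ofPred.1 (hZ hz)) (ncard_le_mul_ncard_image (toFinite _) σ (hb z))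
  refine ⟨w, hwB, fun z hz => ?_⟩
  obtain ⟨s, -, hs⟩ := hw z hz
  simp only [mem_iUnion] at hs
  obtain ⟨j, ⟨-, rfl⟩, hj⟩ := hs
  exact ⟨j, hj⟩

theorem exists_isRecurrentCompact_of_overlap_le [Fintype ι] [Finite S] (hB : AbsConvex ℝ B)
    (hBc : IsCompact B) (hB0 : B ∈ 𝓝 0) (hmaps : ∀ j, MapsTo (fun z => A z + a j) B B) (hT : 0 < T)
    (hTcard : 2 * T ≤ Fintype.card ι *
      (|(A : E →L[ℝ] E).det| * (1 / 2) ^ Module.finrank ℝ E)) {M : ℝ} (hM0 : 0 < M)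
    (hM : ∀ x, ({j | x ∈ affinePieces A a B j}.ncard : ℝ) ≤ M) (hb0 : 0 < b)
    (hb : ∀ x i, ({j ∈ {j | x ∈ affinePieces A a B j} | σ j = σ i}.ncard : ℝ) ≤ b) (hr : 2 ≤ r)
    (hnum : 16 ^ Module.finrank ℝ E / (A : E →L[ℝ] E).det ^ 2 *
      Real.exp (-((r ^ Module.finrank ℝ E)⁻¹ * (T / M) * (T / b))) < 1) :
    ∃ w : S → E, (∀ s, w s ∈ B) ∧
      ∃ K, IsRecurrentCompact (fun j z => A (z + r • w (σ j)) + a j) B K := by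
  borelize E
  let μ : Measure E := Measure.addHaar
  let U := coveredAtLeast (affinePieces A a ((1 / 2 : ℝ) • B)) T
  let K := coveredAtLeast (affinePieces A a B) T
  have hKB : K ⊆ B := coveredAtLeast_subset hT fun j => (hmaps j).image_subset
  have hUK : U ⊆ K := coveredAtLeast_mono (affinePieces_mono _ _ (hB.1 _ (by norm_num))) T
  have hUvol : T / M ≤ μ[|B].real U :=
    le_measureReal_cond_coveredAtLeast μ hB.1 hBc hB0 (A := (A : E →L[ℝ] E)) hmaps hT.le hTcard
      hM0 hM
  have hU0 : U.Nonempty := nonempty_of_measureReal_ne_zero (hUvol.trans_lt' (by positivity)).ne'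
  have hUm : MeasurableSet U := measurableSet_coveredAtLeast
    (fun j => (isCompact_affinePieces (A : E →L[ℝ] E) a (hBc.smul _) j).measurableSet) T
  have hKc : IsCompact K := hBc.of_isClosed_subset (isClosed_coveredAtLeast
    (fun j => (isCompact_affinePieces (A : E →L[ℝ] E) a hBc j).isClosed) T) hKB
  have hAB : MapsTo A B B :=
    have ⟨j, _⟩ := exists_mem_of_mem_coveredAtLeast hT hU0.some_mem
    mapsTo_of_mapsTo_add_const hB (A : E →ₗ[ℝ] E) (hmaps j)
  obtain ⟨Z, hZK, hZcard, hKZ⟩ := exists_finset_net_apply_apply hB hBc hB0 hKB A hAB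
  obtain ⟨w, hwB, hw⟩ := exists_parameters_forall_exists_sub_smul_mem μ hB hBc hB0 hUm
    (hUK.trans hKB) hZK hb0 hb hr (p := (r ^ Module.finrank ℝ E)⁻¹ * (T / M)) (by positivity)
    (by gcongr) (hnum.trans_le' (by gcongr))
  refine ⟨w, hwB, K, isRecurrentCompact_of_subset (hU0.mono hUK) hKc hKB fun z hz => ?_⟩
  obtain ⟨z₁, hz₁, x, hx, rfl⟩ := hKZ z hz
  obtain ⟨j, hj⟩ := hw z₁ hz₁
  refine ⟨_, add_apply_mem_interior_coveredAtLeast hB.2 hB0 hj hx, j, ?_⟩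
  rw [add_right_comm, sub_add_cancel, map_add, A.apply_symm_apply, add_right_comm, sub_add_cancel]

end RecurrentCompact

section Words

variable {d H : ℕ} {L : EuclideanSpace ℝ (Fin d) →L[ℝ] EuclideanSpace ℝ (Fin d)}
  {v : Fin H → EuclideanSpace ℝ (Fin d)} {B : Set (EuclideanSpace ℝ (Fin d))}

lemma wordMap_eq_pow_apply_add (n : ℕ) (w : Fin n → Fin H) (z : EuclideanSpace ℝ (Fin d)) :
    wordMap L v n w z = (L ^ n) z + wordMap L v n w 0 := by
  induction n with
  | zero => simp [wordMap]
  | succ n ih =>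
    rw [wordMap, wordMap, ih, map_add, pow_succ', mul_apply_eq_comp, add_assoc]

lemma mapsTo_wordMap (hmaps : ∀ j, MapsTo (fun z => L z + v j) B B) (n : ℕ) (w : Fin n → Fin H) :
    MapsTo (wordMap L v n w) B B := by
  induction n with
  | zero => exact mapsTo_id B
  | succ n ih => exact (hmaps _).comp (ih _)

/-- The maps `L_j` being injective, words through `x` with a common last letter come from words
through the one preimage of `x`. -/
lemma ncard_setOf_mem_image_wordMap_suffix_le (hL : Function.Injective L) {k : ℕ} {b : ℝ}
    (hb : ∀ x, ({w : Fin k → Fin H | x ∈ wordMap L v k w '' B}.ncard : ℝ) ≤ b) {n : ℕ}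
    (hkn : k ≤ n) (x : EuclideanSpace ℝ (Fin d)) (u : Fin n → Fin H) :
    ({w : Fin n → Fin H | x ∈ wordMap L v n w '' B ∧ ∀ i : Fin n, k ≤ i → w i = u i}.ncard : ℝ)
      ≤ b := by
  induction n, hkn using Nat.le_induction generalizing x with
  | base => exact (hb x).trans' (by exact_mod_cast ncard_le_ncard (sep_subset _ _))
  | succ n hkn ih =>
    let F := {w : Fin (n + 1) → Fin H |
      x ∈ wordMap L v (n + 1) w '' B ∧ ∀ i : Fin (n + 1), k ≤ i → w i = u i}
    have hlast : ∀ w ∈ F, w (Fin.last n) = u (Fin.last n) := fun w hw => hw.2 _ hkn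
    rcases F.eq_empty_or_nonempty with hF | ⟨w₀, hw₀⟩
    · simpa only [F, hF, ncard_empty, Nat.cast_zero] using (Nat.cast_nonneg _).trans (hb x)
    obtain ⟨z₀, -, hz₀⟩ := hw₀.1
    refine (ih (wordMap L v n (Fin.init w₀) z₀) (Fin.init u)).trans' ?_
    refine Nat.cast_le.2 (ncard_le_ncard_of_injOn Fin.init ?_ ?_)
    · rintro w hw
      obtain ⟨z, hz, hxz⟩ := hw.1
      have hpoint : wordMap L v n (Fin.init w) z = wordMap L v n (Fin.init w₀) z₀ := by
        refine hL (add_right_cancel (b := v (u (Fin.last n))) ?_)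
        nth_rw 1 [← hlast w hw, ← hlast w₀ hw₀]
        exact hxz.trans hz₀.symm
      exact ⟨⟨z, hz, hpoint⟩, fun i hi => hw.2 i.castSucc hi⟩
    · intro w hw w' hw' hinit
      rw [← Fin.snoc_init_self w, ← Fin.snoc_init_self w', hinit, hlast w hw, hlast w' hw']

lemma mem_affinePieces_wordMap_iff (hL : Function.Injective L) (n : ℕ) (w : Fin n → Fin H)
    (v0 x : EuclideanSpace ℝ (Fin d)) :
    L x + v0 ∈ affinePieces (L ^ (n + 1)) (fun w => L (wordMap L v n w 0) + v0) B w ↔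
      x ∈ wordMap L v n w '' B := by
  refine exists_congr fun z => and_congr_right fun _ => ?_
  dsimp only
  rw [wordMap_eq_pow_apply_add n w z, ← add_assoc, add_left_inj, pow_succ', mul_apply_eq_comp,
    ← map_add, hL.eq_iff]

theorem exists_isRecurrentCompact_wordMap (hB : AbsConvex ℝ B) (hBc : IsCompact B) (hB0 : B ∈ 𝓝 0)
    (hL : L.det ≠ 0) {v0 : EuclideanSpace ℝ (Fin d)} (hmap0 : MapsTo (fun z => L z + v0) B B)
    (hmap : ∀ j, MapsTo (fun z => L z + v j) B B) {k n : ℕ} (hkn : k ≤ n) {T M b r : ℝ}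
    (hT : 0 < T) (hTcard : 2 * T ≤ H ^ n * (|L.det| ^ (n + 1) * (1 / 2) ^ d)) (hM0 : 0 < M)
    (hM : ∀ x, ({w : Fin n → Fin H | x ∈ wordMap L v n w '' B}.ncard : ℝ) ≤ M) (hb0 : 0 < b)
    (hb : ∀ x, ({w : Fin k → Fin H | x ∈ wordMap L v k w '' B}.ncard : ℝ) ≤ b) (hr : 2 ≤ r)
    (hnum : 16 ^ d / (|L.det| ^ (n + 1)) ^ 2 *
      Real.exp (-((r ^ d)⁻¹ * (T / M) * (T / b))) < 1) :
    ∃ w : (Fin n → Fin H) → EuclideanSpace ℝ (Fin d), (∀ j, w j ∈ B) ∧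
      (∀ w1 w2, (∀ i : Fin n, k ≤ i → w1 i = w2 i) → w w1 = w w2) ∧
      ∃ K, IsRecurrentCompact
        (fun j z => L (wordMap L v n j z) + v0 + r • (L ^ (n + 1)) (w j)) B K := by
  have hdet : (L ^ (n + 1)).det = L.det ^ (n + 1) := by
    rw [ContinuousLinearMap.det, ContinuousLinearMap.toLinearMap_pow, map_pow]
  let L' := L.toContinuousLinearEquivOfDetNeZero hL
  have hinv : ∀ x, L (L'.symm x) = x := L'.apply_symm_apply
  let A := (L ^ (n + 1)).toContinuousLinearEquivOfDetNeZero (hdet ▸ pow_ne_zero _ hL)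
  let a : (Fin n → Fin H) → EuclideanSpace ℝ (Fin d) := fun j => L (wordMap L v n j 0) + v0
  have hA : ∀ z, A z = (L ^ (n + 1)) z := fun _ => rfl
  have hdetA : (A : EuclideanSpace ℝ (Fin d) →L[ℝ] EuclideanSpace ℝ (Fin d)).det =
    L.det ^ (n + 1) := hdet
  have hmapA : ∀ j z, A z + a j = L (wordMap L v n j z) + v0 := fun j z => by
    rw [hA, wordMap_eq_pow_apply_add n j z, pow_succ', mul_apply_eq_comp, map_add, add_assoc]
  have hpieces : ∀ x j, x ∈ affinePieces A a B j ↔ L'.symm (x - v0) ∈ wordMap L v n j '' B := by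
    intro x j
    rw [← mem_affinePieces_wordMap_iff L'.injective n j v0, hinv, sub_add_cancel]
    rfl
  obtain ⟨w, hwB, K, hK⟩ := exists_isRecurrentCompact_of_overlap_le (A := A) (a := a)
    (σ := Set.domRestrict {i : Fin n | k ≤ i}) hB hBc hB0
    (fun j => by simp only [hmapA]; exact hmap0.comp (mapsTo_wordMap hmap n j)) hT
    (by simpa only [hdetA, abs_pow, Fintype.card_fun, Fintype.card_fin, Nat.cast_pow,
      finrank_euclideanSpace_fin] using hTcard) hM0
    (fun x => by simpa only [hpieces] using hM (L'.symm (x - v0))) hb0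
    (fun x u => by
      simp only [hpieces, domRestrict_eq_domRestrict_iff]
      exact ncard_setOf_mem_image_wordMap_suffix_le L'.injective hb hkn (L'.symm (x - v0)) u) hr
    (by rwa [hdetA, finrank_euclideanSpace_fin, ← sq_abs, abs_pow])
  refine ⟨fun j => w (Set.domRestrict {i : Fin n | k ≤ i} j), fun j => hwB _,
    fun w1 w2 h => congrArg w (domRestrict_eq_domRestrict_iff.2 h), K, ?_⟩
  simpa only [map_add, map_smul, add_right_comm _ _ (a _), hmapA, hA (w _)] using hK

lemma ncard_setOf_mem_image_wordMap_le_pow {β : ℝ} (hcount : ∀ n : ℕ, 1 ≤ n → ∀ x,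
    (Nat.card {w : Fin n → Fin H // x ∈ wordMap L v n w '' B} : ℝ) ≤ β ^ n) (n : ℕ)
    (x : EuclideanSpace ℝ (Fin d)) :
    ({w : Fin n → Fin H | x ∈ wordMap L v n w '' B}.ncard : ℝ) ≤ β ^ n := by
  rcases n.eq_zero_or_pos with rfl | hn
  · simpa only [pow_zero, Nat.cast_le_one] using ncard_le_one_of_subsingleton _
  · exact hcount n hn x

end Words

section Rates

lemma eventually_mul_pow_mul_exp_neg_lt_one (C : ℝ) {a c₀ θ : ℝ} (ha : 0 < a) (hc₀ : 0 < c₀)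
    (hθ : 1 < θ) : ∀ᶠ n : ℕ in atTop, C * a ^ n * Real.exp (-(c₀ * θ ^ n)) < 1 := by
  have hlim := ((tendsto_rpow_mul_exp_neg_mul_atTop_nhds_zero (Real.logb θ a) c₀ hc₀).comp
    (tendsto_pow_atTop_atTop_of_one_lt hθ)).const_mul C
  rw [mul_zero] at hlim
  filter_upwards [hlim.eventually_lt_const one_pos] with n hn
  have ha_pow : (θ ^ n) ^ Real.logb θ a = a ^ n := by
    rw [← Real.rpow_natCast_mul (by positivity), mul_comm, Real.rpow_mul_natCast (by positivity),
      Real.rpow_logb (by positivity) hθ.ne' ha]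
  simpa only [Function.comp_apply, ha_pow, neg_mul, mul_assoc] using hn

lemma pow_mul_pow_sub_floor_le {β c : ℝ} (hβ : 1 ≤ β) (hc : c ≤ 1) (n : ℕ) :
    β ^ n * β ^ (n - (⌊c * n⌋₊ + 1)) ≤ (β ^ (2 - c)) ^ n := by
  have hexp : (n : ℝ) + (n - (⌊c * n⌋₊ + 1) : ℕ) ≤ (2 - c) * n := by
    rcases le_total (⌊c * n⌋₊ + 1) n with h | h
    · push_cast [h]
      linarith [Nat.lt_floor_add_one (c * n)]
    · rw [Nat.sub_eq_zero_of_le h]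
      push_cast
      nlinarith [(n.cast_nonneg : (0 : ℝ) ≤ n)]
  rw [← pow_add, ← Real.rpow_natCast, ← Real.rpow_mul_natCast (by positivity), Nat.cast_add]
  exact Real.rpow_le_rpow_of_exponent_le hβ hexp

lemma eventually_div_sq_mul_exp_neg_lt_one {C J ρ β c κ₁ κ : ℝ} (hC : 0 ≤ C) (hJ : 0 < J)
    (hρ : 0 < ρ) (hβ : 1 ≤ β) (hc : c ≤ 1) (hdim : β ^ (2 - c) < ρ ^ 2) (hκ₁ : 0 < κ₁)
    (hκ : 0 < κ) :
    ∀ᶠ n : ℕ in atTop, C / (J ^ (n + 1)) ^ 2 * Real.exp (-(κ₁ * (κ * ρ ^ n / β ^ n) *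
      (κ * ρ ^ n / β ^ (n - (⌊c * n⌋₊ + 1))))) < 1 := by
  have : 0 < β := one_pos.trans_le hβ
  have hθ : 1 < ρ ^ 2 / β ^ (2 - c) := (one_lt_div (by positivity)).2 hdim
  filter_upwards [eventually_mul_pow_mul_exp_neg_lt_one (C / J ^ 2) (a := (J ^ 2)⁻¹)
    (c₀ := κ₁ * κ ^ 2) (by positivity) (by positivity) hθ] with n hn
  refine hn.trans_le' (mul_le_mul (le_of_eq ?_) (Real.exp_le_exp.2 (neg_le_neg ?_))
    (by positivity) (by positivity))
  · rw [inv_pow, ← div_eq_mul_inv, div_div, pow_right_comm, ← pow_succ']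
  · calc κ₁ * κ ^ 2 * (ρ ^ 2 / β ^ (2 - c)) ^ n
        = κ₁ * (κ * ρ ^ n) ^ 2 / (β ^ (2 - c)) ^ n := by
          rw [div_pow]
          ring
      _ ≤ κ₁ * (κ * ρ ^ n) ^ 2 / (β ^ n * β ^ (n - (⌊c * n⌋₊ + 1))) := by
          gcongr
          exact pow_mul_pow_sub_floor_le hβ hc n
      _ = κ₁ * (κ * ρ ^ n / β ^ n) * (κ * ρ ^ n / β ^ (n - (⌊c * n⌋₊ + 1))) := by
          field_simp

end Rates

section UnitCube

variable (d : ℕ)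

lemma unitCube_eq_preimage_closedBall :
    unitCube d = WithLp.ofLp ⁻¹' Metric.closedBall (0 : Fin d → ℝ) (1 / 2) := by
  ext x
  simp only [unitCube, mem_ofPred, mem_preimage, mem_closedBall_zero_iff,
    pi_norm_le_iff_of_nonneg one_half_pos.le, Real.norm_eq_abs]

lemma absConvex_unitCube : AbsConvex ℝ (unitCube d) := by
  rw [unitCube_eq_preimage_closedBall]
  let f : EuclideanSpace ℝ (Fin d) →ₗ[ℝ] Fin d → ℝ := (WithLp.linearEquiv 2 ℝ _).toLinearMap
  exact ⟨balanced_closedBall_zero.mulActionHom_preimage f.toMulActionHom,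
    (convex_closedBall _ _).linear_preimage f⟩

lemma isCompact_unitCube : IsCompact (unitCube d) := by
  rw [unitCube_eq_preimage_closedBall]
  exact (PiLp.homeomorph 2 fun _ : Fin d => ℝ).isCompact_preimage.2 (isCompact_closedBall 0 _)

lemma unitCube_mem_nhds_zero : unitCube d ∈ 𝓝 0 := by
  rw [unitCube_eq_preimage_closedBall]
  exact (PiLp.continuous_ofLp 2 _).continuousAt.preimage_mem_nhds
    (Metric.closedBall_mem_nhds _ one_half_pos)

end UnitCube

theorem ifs_perturbation_recurrent_compact_general {d H : ℕ}
    {L : EuclideanSpace ℝ (Fin d) →L[ℝ] EuclideanSpace ℝ (Fin d)}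
    {v0 : EuclideanSpace ℝ (Fin d)} {v : Fin H → EuclideanSpace ℝ (Fin d)}
    {B : Set (EuclideanSpace ℝ (Fin d))} (hB : AbsConvex ℝ B) (hBc : IsCompact B) (hB0 : B ∈ 𝓝 0)
    (hmap0 : MapsTo (fun z => L z + v0) B B) (hmap : ∀ j, MapsTo (fun z => L z + v j) B B)
    {β c r : ℝ} (hβ : 1 ≤ β) (hc : c ≤ 1) (hdim : β ^ (2 - c) < (|L.det| * H) ^ 2)
    (hcount : ∀ n : ℕ, 1 ≤ n → ∀ x,
      (Nat.card {w : Fin n → Fin H // x ∈ wordMap L v n w '' B} : ℝ) ≤ β ^ n) (hr : 2 ≤ r) :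
    ∃ n₀ : ℕ, ∀ n, n₀ ≤ n →
      ∃ w : (Fin n → Fin H) → EuclideanSpace ℝ (Fin d), (∀ j, w j ∈ B) ∧
        (∀ w1 w2, (∀ i : Fin n, n - (⌊c * n⌋₊ + 1) ≤ i → w1 i = w2 i) → w w1 = w w2) ∧
        ∃ K, IsRecurrentCompact
          (fun j z => L (wordMap L v n j z) + v0 + r • (L ^ (n + 1)) (w j)) B K := by
  have : 0 < β := one_pos.trans_le hβ
  have hρ : 0 < |L.det| * H :=
    lt_of_pow_lt_pow_left₀ 2 (by positivity) (by simpa using hdim.trans' (by positivity))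
  have hJ : 0 < |L.det| := pos_of_mul_pos_left hρ H.cast_nonneg
  have : 0 < r := two_pos.trans_le hr
  obtain ⟨n₀, hn₀⟩ := eventually_atTop.1 <| eventually_div_sq_mul_exp_neg_lt_one
    (C := 16 ^ d) (κ₁ := (r ^ d)⁻¹) (κ := |L.det| * (1 / 2) ^ d / 2) (by positivity) hJ hρ hβ hc
    hdim (by positivity) (by positivity)
  have hoverlap := ncard_setOf_mem_image_wordMap_le_pow hcount
  refine ⟨n₀, fun n hn => ?_⟩
  exact exists_isRecurrentCompact_wordMap hB hBc hB0 (abs_pos.1 hJ) hmap0 hmap (Nat.sub_le _ _)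
    (by positivity) (le_of_eq (by ring)) (by positivity) (hoverlap n) (by positivity)
    (hoverlap _) hr (hn₀ n hn)

/-- **Probabilistic perturbation of iterated function systems (Proposition p.IFS).**
Under the dimension-deficit assumption `β^{2−c} < (J·H)²`, for all large `n` one can choose
translation parameters `w_{j̲}`, depending only on the last `m = ⌊cn⌋+1` letters of the word
`j̲`, such that the perturbed IFS `z ↦ L₀(L_{j̲}(z)) + 10·L^{n+1}(w_{j̲})` satisfies the
recurrent compact condition. -/
theorem ifs_perturbation_recurrent_compact
    (d : ℕ) (hd : 1 ≤ d)
    (L : EuclideanSpace ℝ (Fin d) →L[ℝ] EuclideanSpace ℝ (Fin d))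
    (hLbij : Function.Bijective L) (hLnorm : ‖L‖ < 1)
    (H : ℕ) (hH : 1 ≤ H)
    (v0 : EuclideanSpace ℝ (Fin d)) (v : Fin H → EuclideanSpace ℝ (Fin d))
    (hv0 : v0 ∈ unitCube d) (hv : ∀ j, v j ∈ unitCube d)
    (hmap0 : ∀ z ∈ unitCube d, L z + v0 ∈ interior (unitCube d))
    (hmap : ∀ j : Fin H, ∀ z ∈ unitCube d, L z + v j ∈ interior (unitCube d))
    (J : ℝ) (hJ : J = |LinearMap.det L.toLinearMap|)
    (β c : ℝ) (hβ : 1 < β) (hc : c ∈ Set.Ioo (0 : ℝ) 1)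
    (hdim : β ^ ((2 : ℝ) - c) < (J * H) ^ 2)
    (hcount : ∀ n : ℕ, 1 ≤ n → ∀ x : EuclideanSpace ℝ (Fin d),
      (Nat.card {w : Fin n → Fin H // x ∈ wordMap L v n w '' unitCube d} : ℝ) ≤ β ^ n) :
    ∃ n₀ : ℕ, ∀ n : ℕ, n₀ ≤ n →
      ∃ w : (Fin n → Fin H) → EuclideanSpace ℝ (Fin d),
        (∀ j, w j ∈ unitCube d) ∧
        (∀ w1 w2 : Fin n → Fin H,
          (∀ i : Fin n, n - (Nat.floor (c * n) + 1) ≤ (i : ℕ) → w1 i = w2 i) →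
          w w1 = w w2) ∧
        ∃ K : Set (EuclideanSpace ℝ (Fin d)), K.Nonempty ∧ IsCompact K ∧
          K ⊆ (⋃ j : Fin n → Fin H,
            (fun z => L (wordMap L v n j z) + v0 + (10 : ℝ) • ((L ^ (n + 1)) (w j))) ''
              unitCube d) ∧
          ∀ z ∈ K, ∃ z' ∈ interior K, ∃ j : Fin n → Fin H,
            L (wordMap L v n j z') + v0 + (10 : ℝ) • ((L ^ (n + 1)) (w j)) = z := by
  subst hJ
  exact ifs_perturbation_recurrent_compact_general (absConvex_unitCube d) (isCompact_unitCube d)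
    (unitCube_mem_nhds_zero d) (fun z hz => interior_subset (hmap0 z hz))
    (fun j z hz => interior_subset (hmap j z hz)) hβ.le hc.2.le hdim hcount (by norm_num)
end

section
/- Fix integers d_u, d_s ≥ 0 and let E = ℝ^{d_u} × ℝ^{d_s}, where each factor carries the Euclidean norm and E carries the norm ‖(u,v)‖ = max(‖u‖, ‖v‖). For every κ > 0 there exist θ > 0 and η₀ > 0 with the following property. Let (L_n^u)_{n∈ℤ} be invertible linear maps of ℝ^{d_u} with ‖(L_n^u)⁻¹‖ ≤ e^{−κ}, let (L_n^s)_{n∈ℤ} be linear maps of ℝ^{d_s} with ‖L_n^s‖ ≤ e^{−κ}, and set L_n = L_n^u × L_n^s on E. Let (g_n)_{n∈ℤ} be maps g_n : E → E such that g_n − L_n is Lipschitz with constant η₀. Then for every ε > 0 and every sequence (x_n)_{n∈ℤ} in E with ‖g_n(x_n) − x_{n+1}‖ ≤ ε for all n ∈ ℤ, there exists exactly one sequence (y_n)_{n∈ℤ} in E satisfying g_n(y_n) = y_{n+1} for all n and sup_{n∈ℤ} ‖y_n − x_n‖ ≤ θ·ε. -/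
/-!
The orbits of `(g_n)` are the fixed points of the operator `T` on sequences which moves the stable
coordinate forwards and pulls the unstable one back, where `h_n = g_n - L_n`:

* `(T z)_n^u = (L_n^u)⁻¹ (z_{n+1}^u - h_n(z_n)^u)`,
* `(T z)_n^s = (g_{n-1}(z_{n-1}))^s`.

If `(L_n^u)⁻¹` and `L_n^s` are `c`-Lipschitz and `h_n` is `η`-Lipschitz, with `c + η < 1`, then `T`
contracts the sup distance by the factor `c + η` and moves an `ε`-pseudo-orbit by at most `ε`. The
sup distance may be infinite, but the Banach fixed point theorem applies among the sequences at
finite distance from the pseudo-orbit, and gives exactly one orbit there, at distance at most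
`ε / (1 - (c + η))`.
-/

open Function UniformFun
open scoped ENNReal NNReal UniformConvergence

theorem existsUnique_isFixedPt_edist_le {X : Type*} [EMetricSpace X] [CompleteSpace X]
    {K : ℝ≥0} {T : X → X} (hT : ContractingWith K T) {x : X} {δ : ℝ≥0∞} (hδ : δ ≠ ∞)
    (hx : edist x (T x) ≤ δ) :
    ∃! y, IsFixedPt T y ∧ edist x y ≤ δ / (1 - K) := by
  have hx' : edist x (T x) ≠ ∞ := ne_top_of_le_ne_top hδ hx
  refine ⟨hT.efixedPoint T x hx', ⟨hT.efixedPoint_isFixedPt hx',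
    (hT.edist_efixedPoint_le hx').trans (ENNReal.div_le_div_right hx _)⟩, ?_⟩
  rintro y ⟨hy, hxy⟩
  refine (hT.eq_or_edist_eq_top_of_fixedPoints hy (hT.efixedPoint_isFixedPt hx')).resolve_right ?_
  have hxy' : edist x y ≠ ∞ :=
    ne_top_of_le_ne_top (ENNReal.div_ne_top hδ hT.one_sub_K_ne_zero) hxy
  exact ((edist_triangle_left _ _ x).trans_lt
    (ENNReal.add_lt_top.2 ⟨hxy'.lt_top, hT.edist_efixedPoint_lt_top hx'⟩)).ne

theorem edist_le_coe_iff_forall_norm_sub_le {ι E : Type*} [SeminormedAddCommGroup E] {x y : ι →ᵤ E}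
    {r : ℝ≥0} : edist x y ≤ r ↔ ∀ n, ‖toFun y n - toFun x n‖ ≤ r := by
  simp only [edist_le, edist_le_coe, ← NNReal.coe_le_coe, coe_nndist, dist_eq_norm']

section OrbitOperator

variable {Eu Es : Type*} {Lu : ℤ → Eu ≃ Eu} {Ls : ℤ → Es → Es} {g : ℤ → Eu × Es → Eu × Es}

section Algebra

variable [AddCommGroup Eu]

/-- The operator on sequences in `Eu × Es` whose fixed points are the orbits of `(g n)`: the
unstable coordinate of `g n (z n) = z (n + 1)` is solved for `z n` through the inverse of the
expansion `Lu n`, the stable one for `z (n + 1)`. Sequences carry the structure of uniform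
convergence, so that their distance is the possibly infinite sup distance. -/
def orbitOperator (Lu : ℤ → Eu ≃ Eu) (g : ℤ → Eu × Es → Eu × Es) (z : ℤ →ᵤ Eu × Es) :
    ℤ →ᵤ Eu × Es :=
  ofFun fun n =>
    ((Lu n).symm ((toFun z (n + 1)).1 - ((g n (toFun z n)).1 - Lu n (toFun z n).1)),
      (g (n - 1) (toFun z (n - 1))).2)

theorem isFixedPt_orbitOperator_iff {z : ℤ →ᵤ Eu × Es} :
    IsFixedPt (orbitOperator Lu g) z ↔ ∀ n, g n (toFun z n) = toFun z (n + 1) := by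
  have unstable (n : ℤ) : (toFun (orbitOperator Lu g z) n).1 = (toFun z n).1 ↔
      (g n (toFun z n)).1 = (toFun z (n + 1)).1 := by
    simp only [orbitOperator, toFun_ofFun, Equiv.symm_apply_eq]
    rw [← sub_add, add_eq_right, sub_eq_zero, eq_comm]
  have stable (n : ℤ) : (toFun (orbitOperator Lu g z) (n + 1)).2 = (toFun z (n + 1)).2 ↔
      (g n (toFun z n)).2 = (toFun z (n + 1)).2 := by
    simp only [orbitOperator, toFun_ofFun, add_sub_cancel_right]
  calc IsFixedPt (orbitOperator Lu g) z
    _ ↔ (∀ n, (toFun (orbitOperator Lu g z) n).1 = (toFun z n).1) ∧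
          ∀ n, (toFun (orbitOperator Lu g z) n).2 = (toFun z n).2 := by
      rw [IsFixedPt, ← toFun.injective.eq_iff, funext_iff, ← forall_and]
      simp only [Prod.ext_iff]
    _ ↔ (∀ n, (toFun (orbitOperator Lu g z) n).1 = (toFun z n).1) ∧
          ∀ n, (toFun (orbitOperator Lu g z) (n + 1)).2 = (toFun z (n + 1)).2 :=
      and_congr_right' (add_right_surjective (1 : ℤ)).forall
    _ ↔ ∀ n, g n (toFun z n) = toFun z (n + 1) := by
      simp only [unstable, stable, Prod.ext_iff, forall_and]

end Algebra

section Estimates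

variable [SeminormedAddCommGroup Eu] [PseudoEMetricSpace Es]

theorem lipschitzWith_orbitOperator {c η K : ℝ≥0} (hLu : ∀ n, LipschitzWith c (Lu n).symm)
    (hgu : ∀ n, LipschitzWith η fun z => (g n z).1 - Lu n z.1)
    (hgs : ∀ n, LipschitzWith K fun z => (g n z).2) :
    LipschitzWith (max (c * (1 + η)) K) (orbitOperator Lu g) := by
  refine lipschitzWith_iff.2 fun n => .prodMk ?_ ?_
  · have next : LipschitzWith 1 fun z : ℤ →ᵤ Eu × Es => (toFun z (n + 1)).1 := by
      simpa [comp_def] using LipschitzWith.prod_fst.comp (lipschitzWith_eval (n + 1))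
    have perturbation : LipschitzWith η fun z : ℤ →ᵤ Eu × Es =>
        (g n (toFun z n)).1 - Lu n (toFun z n).1 := by
      simpa [comp_def] using (hgu n).comp (lipschitzWith_eval n)
    exact (hLu n).comp (next.sub perturbation)
  · simpa [comp_def] using (hgs (n - 1)).comp (lipschitzWith_eval (n - 1))

theorem edist_orbitOperator_self_le {c : ℝ≥0} (hc : c ≤ 1)
    (hLu : ∀ n, LipschitzWith c (Lu n).symm) {x : ℤ →ᵤ Eu × Es} {ε : ℝ≥0∞}
    (hx : ∀ n, edist (g n (toFun x n)) (toFun x (n + 1)) ≤ ε) :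
    edist x (orbitOperator Lu g x) ≤ ε := by
  rw [edist_comm]
  refine edist_le.2 fun n => max_le ?_ ?_
  · calc edist (toFun (orbitOperator Lu g x) n).1 (toFun x n).1
      _ = edist ((Lu n).symm ((toFun x (n + 1)).1 - ((g n (toFun x n)).1 - Lu n (toFun x n).1)))
            ((Lu n).symm (Lu n (toFun x n).1)) := by rw [Equiv.symm_apply_apply]; rfl
      _ ≤ c * edist ((toFun x (n + 1)).1 - ((g n (toFun x n)).1 - Lu n (toFun x n).1))
            (Lu n (toFun x n).1) := hLu n _ _
      _ = c * edist (g n (toFun x n)).1 (toFun x (n + 1)).1 := by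
        rw [edist_comm, edist_eq_enorm_sub, edist_eq_enorm_sub]
        congr 2
        abel
      _ ≤ 1 * ε := mul_le_mul' (mod_cast hc) ((le_max_left _ _).trans (hx n))
      _ = ε := one_mul ε
  · have hstable := (le_max_right _ _).trans (hx (n - 1))
    rwa [sub_add_cancel] at hstable

end Estimates

section Shadowing

variable [NormedAddCommGroup Eu] [NormedAddCommGroup Es]

theorem contractingWith_orbitOperator {c η : ℝ≥0} (hcη : c + η < 1)
    (hLu : ∀ n, LipschitzWith c (Lu n).symm) (hLs : ∀ n, LipschitzWith c (Ls n))
    (hg : ∀ n, LipschitzWith η fun z => g n z - Prod.map (Lu n) (Ls n) z) :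
    ContractingWith (c + η) (orbitOperator Lu g) := by
  have hgu (n : ℤ) : LipschitzWith η fun z => (g n z).1 - Lu n z.1 := by
    simpa [comp_def] using LipschitzWith.prod_fst.comp (hg n)
  have hgs (n : ℤ) : LipschitzWith (c + η) fun z => (g n z).2 := by
    simpa [comp_def] using
      ((hLs n).comp LipschitzWith.prod_snd).add (LipschitzWith.prod_snd.comp (hg n))
  refine ⟨hcη, (lipschitzWith_orbitOperator hLu hgu hgs).weaken (max_le ?_ le_rfl)⟩
  have hc : c ≤ 1 := le_self_add.trans hcη.le
  calc c * (1 + η) = c + c * η := by ring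
    _ ≤ c + η := by gcongr; exact mul_le_of_le_one_left' hc

theorem shadowing_sequence_exists_unique_general [CompleteSpace Eu] [CompleteSpace Es]
    {c η : ℝ≥0} (hcη : c + η < 1)
    (hLu : ∀ n, LipschitzWith c (Lu n).symm) (hLs : ∀ n, LipschitzWith c (Ls n))
    (hg : ∀ n, LipschitzWith η fun z => g n z - Prod.map (Lu n) (Ls n) z)
    {ε : ℝ} {x : ℤ → Eu × Es} (hx : ∀ n, ‖g n (x n) - x (n + 1)‖ ≤ ε) :
    ∃! y : ℤ → Eu × Es,
      (∀ n, g n (y n) = y (n + 1)) ∧ ∀ n, ‖y n - x n‖ ≤ (1 - (c + η : ℝ))⁻¹ * ε := by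
  lift ε to ℝ≥0 using (norm_nonneg _).trans (hx 0)
  have hx' (n : ℤ) : edist (g n (x n)) (x (n + 1)) ≤ ε := by
    rw [edist_le_coe, ← NNReal.coe_le_coe, coe_nndist, dist_eq_norm]
    exact hx n
  have hT := contractingWith_orbitOperator hcη hLu hLs hg
  have hfix := existsUnique_isFixedPt_edist_le hT ENNReal.coe_ne_top
    (edist_orbitOperator_self_le (x := ofFun x) (le_self_add.trans hcη.le) hLu hx')
  have hradius : (ε / (1 - (c + η : ℝ≥0)) : ℝ≥0∞) = (ε / (1 - (c + η)) : ℝ≥0) := by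
    rw [ENNReal.coe_div (tsub_pos_of_lt hcη).ne', ENNReal.coe_sub, ENNReal.coe_one]
  simp only [hradius, isFixedPt_orbitOperator_iff, edist_le_coe_iff_forall_norm_sub_le] at hfix
  rw [NNReal.coe_div, NNReal.coe_sub hcη.le, NNReal.coe_one, NNReal.coe_add,
    div_eq_inv_mul] at hfix
  -- `ℤ →ᵤ Eu × Es` is a type synonym of `ℤ → Eu × Es`, so only `toFun` separates the two claims.
  exact hfix

end Shadowing

end OrbitOperator

/-- **Shadowing for sequences of hyperbolic maps: existence and uniqueness.**
On `E = ℝ^{d_u} × ℝ^{d_s}` with the max norm, for every `κ > 0` there are `θ, η₀ > 0` such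
that for any sequence of block-hyperbolic linear maps `L_n = L_n^u × L_n^s` (with
`‖(L_n^u)⁻¹‖ ≤ e^{−κ}` and `‖L_n^s‖ ≤ e^{−κ}`) and maps `g_n` with `g_n − L_n` Lipschitz of
constant `η₀`, every `ε`-pseudo-orbit of `(g_n)` is `θε`-shadowed by a unique true orbit. -/
theorem shadowing_sequence_exists_unique (du ds : ℕ) (κ : ℝ) (hκ : 0 < κ) :
    ∃ θ : ℝ, 0 < θ ∧ ∃ η₀ : ℝ, 0 < η₀ ∧
      ∀ (Lu : ℤ → (EuclideanSpace ℝ (Fin du) →L[ℝ] EuclideanSpace ℝ (Fin du)))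
        (Ls : ℤ → (EuclideanSpace ℝ (Fin ds) →L[ℝ] EuclideanSpace ℝ (Fin ds))),
        (∀ n, Function.Bijective (Lu n)) →
        (∀ n, ∀ u : EuclideanSpace ℝ (Fin du), ‖u‖ ≤ Real.exp (-κ) * ‖Lu n u‖) →
        (∀ n, ‖Ls n‖ ≤ Real.exp (-κ)) →
        ∀ g : ℤ → (EuclideanSpace ℝ (Fin du) × EuclideanSpace ℝ (Fin ds)) →
            (EuclideanSpace ℝ (Fin du) × EuclideanSpace ℝ (Fin ds)),
        (∀ n, ∀ x y : EuclideanSpace ℝ (Fin du) × EuclideanSpace ℝ (Fin ds),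
          ‖(g n x - (ContinuousLinearMap.prodMap (Lu n) (Ls n)) x) -
            (g n y - (ContinuousLinearMap.prodMap (Lu n) (Ls n)) y)‖ ≤ η₀ * ‖x - y‖) →
        ∀ ε : ℝ, 0 < ε →
        ∀ x : ℤ → EuclideanSpace ℝ (Fin du) × EuclideanSpace ℝ (Fin ds),
          (∀ n, ‖g n (x n) - x (n + 1)‖ ≤ ε) →
          ∃! y : ℤ → EuclideanSpace ℝ (Fin du) × EuclideanSpace ℝ (Fin ds),
            (∀ n, g n (y n) = y (n + 1)) ∧ (∀ n, ‖y n - x n‖ ≤ θ * ε) := by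
  have hc : Real.exp (-κ) < 1 := by simpa using hκ
  let c : ℝ≥0 := ⟨Real.exp (-κ), Real.exp_nonneg _⟩
  obtain ⟨η, hη, hcη⟩ : ∃ η : ℝ≥0, 0 < η ∧ c + η < 1 :=
    mod_cast ENNReal.lt_iff_exists_add_pos_lt.1 (ENNReal.coe_lt_one_iff.2 hc : (c : ℝ≥0∞) < 1)
  refine ⟨(1 - (c + η : ℝ))⁻¹, inv_pos.2 (sub_pos.2 (mod_cast hcη)), η, hη, ?_⟩
  intro Lu Ls hbij hLu hLs g hg ε _ x hx
  exact shadowing_sequence_exists_unique_general (Lu := fun n => .ofBijective (Lu n) (hbij n)) hcη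
    (fun n => ((Lu n).antilipschitz_of_bound (K := c) (hLu n)).to_rightInverse
      (Equiv.ofBijective (Lu n) (hbij n)).apply_symm_apply)
    (fun n => (Ls n).lipschitz.weaken (hLs n))
    (fun n => .of_dist_le_mul fun y z => by rw [dist_eq_norm, dist_eq_norm]; exact hg n y z) hx
end

section
/- Fix integers d_u, d_s ≥ 0 and let E = ℝ^{d_u} × ℝ^{d_s}, where each factor carries the Euclidean norm and E carries the norm ‖(u,v)‖ = max(‖u‖, ‖v‖). For all real numbers 0 < κ < κ₀ there exists η₀ > 0 with the following property. Let n₁ ≤ n₂ be integers; for n₁ ≤ n < n₂ let L_n^u be an invertible linear map of ℝ^{d_u} with ‖(L_n^u)⁻¹‖ ≤ e^{−κ₀}, let L_n^s be a linear map of ℝ^{d_s} with ‖L_n^s‖ ≤ e^{−κ₀}, set L_n = L_n^u × L_n^s, and let g_n : E → E be a map such that g_n − L_n is Lipschitz with constant η₀. If (y_n)_{n₁ ≤ n ≤ n₂} and (z_n)_{n₁ ≤ n ≤ n₂} are sequences in E satisfying g_n(y_n) = y_{n+1} and g_n(z_n) = z_{n+1} for all n₁ ≤ n < n₂, then for every k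 with n₁ ≤ k ≤ n₂: ‖z_k − y_k‖ ≤ e^{−κ(k−n₁)}·‖z_{n₁} − y_{n₁}‖ + e^{−κ(n₂−k)}·‖z_{n₂} − y_{n₂}‖. -/
/-!
Let `a n` and `b n` be the norms of the unstable and stable components of `z n - y n`. As long as
the difference lies in the unstable cone `b n ≤ a n`, the perturbation only costs `η * a n`, so `a`
expands by a factor of at least `exp κu`, while `b (n + 1) ≤ exp (-κs) * a n`; hence the cone is
forward invariant. Outside the cone the perturbation costs `η * b n`, so `b` contracts. If the
difference is in the cone at time `k`, it stays there until `n₂`, and `a k` is controlled by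
`a n₂`. Otherwise it was outside the cone at all times since `n₁`, and `b k` is controlled by
`b n₁`.

For equal rates, `η₀ = exp (-κ) - exp (-κ₀)` spends the whole gap available in the stable direction;
the gap `exp κ₀ - exp κ` in the unstable direction is at least as large because `cosh` is monotone
on `[0, ∞)`.
-/

open Real

section GeometricGrowth

variable {a : ℤ → ℝ} {κ : ℝ} {m n : ℤ}

lemma le_exp_mul_of_contracting (hmn : m ≤ n)
    (h : ∀ i, m ≤ i → i < n → a (i + 1) ≤ exp (-κ) * a i) :
    a n ≤ exp (-κ * ((n - m : ℤ) : ℝ)) * a m := by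
  obtain ⟨N, rfl⟩ := Int.le.dest hmn
  have hgeom : a (m + N) ≤ exp (-κ) ^ N * a (m + (0 : ℕ)) :=
    le_geom (u := fun j : ℕ => a (m + j)) (exp_pos _).le N fun j hj => by
      simpa only [Nat.cast_succ, add_assoc] using h (m + j) (by lia) (by lia)
  simpa only [← exp_nat_mul, mul_comm (N : ℝ), Nat.cast_zero, add_zero, add_sub_cancel_left,
    Int.cast_natCast] using hgeom

lemma le_exp_mul_of_expanding (hmn : m ≤ n)
    (h : ∀ i, m ≤ i → i < n → exp κ * a i ≤ a (i + 1)) :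
    a m ≤ exp (-κ * ((n - m : ℤ) : ℝ)) * a n := by
  have hneg : -a n ≤ exp (- -κ * ((n - m : ℤ) : ℝ)) * -a m :=
    le_exp_mul_of_contracting (a := fun i => -a i) hmn fun i hmi hin => by
      simpa only [neg_neg, mul_neg, neg_le_neg_iff] using h i hmi hin
  rw [neg_mul, exp_neg, le_inv_mul_iff₀ (exp_pos _)]
  simpa only [neg_neg, mul_neg, neg_le_neg_iff] using hneg

end GeometricGrowth

/-- One step of a dominated splitting, seen through the norms `a`, `b` of the unstable and stable
components of a vector and the norms `a'`, `b'` of those of its image. The condition `b ≤ a` says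
that the vector lies in the unstable cone. -/
structure DominatedStep (κs κu a b a' b' : ℝ) : Prop where
  stable_le : b' ≤ exp (-κs) * max a b
  unstable_ge : b ≤ a → exp κu * a ≤ a'

lemma DominatedStep.cone_invariant {κs κu a b a' b' : ℝ} (hstep : DominatedStep κs κu a b a' b')
    (hκ : 0 ≤ κs + κu) (ha : 0 ≤ a) (hab : b ≤ a) : b' ≤ a' :=
  calc
    b' ≤ exp (-κs) * a := by simpa only [max_eq_left hab] using hstep.stable_le
    _ ≤ exp κu * a := by gcongr; linarith
    _ ≤ a' := hstep.unstable_ge hab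

section DominatedSequence

variable {κs κu : ℝ} {a b : ℤ → ℝ} {m n : ℤ}

lemma le_of_dominatedStep_of_le (hκ : 0 ≤ κs + κu) (ha : ∀ i, 0 ≤ a i) (hmn : m ≤ n)
    (hstep : ∀ i, m ≤ i → i < n → DominatedStep κs κu (a i) (b i) (a (i + 1)) (b (i + 1)))
    (hab : b m ≤ a m) : b n ≤ a n := by
  induction n, hmn using Int.leInduction with
  | base => exact hab
  | succ n hmn ih =>
    have hn : b n ≤ a n := ih fun i hmi hin => hstep i hmi (by lia)
    exact (hstep n hmn (by lia)).cone_invariant hκ (ha n) hn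

lemma unstable_le_exp_mul_of_le (hκ : 0 ≤ κs + κu) (ha : ∀ i, 0 ≤ a i) (hmn : m ≤ n)
    (hstep : ∀ i, m ≤ i → i < n → DominatedStep κs κu (a i) (b i) (a (i + 1)) (b (i + 1)))
    (hab : b m ≤ a m) : a m ≤ exp (-κu * ((n - m : ℤ) : ℝ)) * a n :=
  le_exp_mul_of_expanding hmn fun i hmi hin =>
    (hstep i hmi hin).unstable_ge <|
      le_of_dominatedStep_of_le hκ ha hmi (fun j hmj hji => hstep j hmj (hji.trans hin)) hab

lemma stable_le_exp_mul_of_lt (hκ : 0 ≤ κs + κu) (ha : ∀ i, 0 ≤ a i) (hmn : m ≤ n)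
    (hstep : ∀ i, m ≤ i → i < n → DominatedStep κs κu (a i) (b i) (a (i + 1)) (b (i + 1)))
    (hab : a n < b n) : b n ≤ exp (-κs * ((n - m : ℤ) : ℝ)) * b m := by
  refine le_exp_mul_of_contracting hmn fun i hmi hin => ?_
  have houtside : a i < b i := by
    contrapose! hab
    exact le_of_dominatedStep_of_le hκ ha hin.le
      (fun j hij hjn => hstep j (hmi.trans hij) hjn) hab
  simpa only [max_eq_right houtside.le] using (hstep i hmi hin).stable_le

theorem max_le_of_dominatedStep (hκ : 0 ≤ κs + κu) (ha : ∀ i, 0 ≤ a i)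
    (hstep : ∀ i, m ≤ i → i < n → DominatedStep κs κu (a i) (b i) (a (i + 1)) (b (i + 1)))
    {k : ℤ} (hmk : m ≤ k) (hkn : k ≤ n) :
    max (a k) (b k) ≤ exp (-κs * ((k - m : ℤ) : ℝ)) * max (a m) (b m) +
      exp (-κu * ((n - k : ℤ) : ℝ)) * max (a n) (b n) := by
  have hmax : ∀ i, 0 ≤ max (a i) (b i) := fun i => le_max_of_le_left (ha i)
  rcases le_or_gt (b k) (a k) with hcone | hcone
  · rw [max_eq_left hcone]
    calc
      a k ≤ exp (-κu * ((n - k : ℤ) : ℝ)) * a n :=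
        unstable_le_exp_mul_of_le hκ ha hkn (fun i hki => hstep i (hmk.trans hki)) hcone
      _ ≤ exp (-κu * ((n - k : ℤ) : ℝ)) * max (a n) (b n) := by
        gcongr
        exact le_max_left _ _
      _ ≤ _ := le_add_of_nonneg_left (mul_nonneg (exp_pos _).le (hmax m))
  · rw [max_eq_right hcone.le]
    calc
      b k ≤ exp (-κs * ((k - m : ℤ) : ℝ)) * b m :=
        stable_le_exp_mul_of_lt hκ ha hmk
          (fun i hmi hik => hstep i hmi (hik.trans_le hkn)) hcone
      _ ≤ exp (-κs * ((k - m : ℤ) : ℝ)) * max (a m) (b m) := by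
        gcongr
        exact le_max_right _ _
      _ ≤ _ := le_add_of_nonneg_right (mul_nonneg (exp_pos _).le (hmax n))

end DominatedSequence

lemma dominatedStep_of_perturbation {U U' S S' : Type*} [SeminormedAddCommGroup U]
    [SeminormedAddCommGroup U'] [SeminormedAddCommGroup S] [SeminormedAddCommGroup S']
    {A : U → U'} {B : S → S'} {g : U × S → U' × S'} {ℓ μ η κs κu : ℝ}
    (hℓ : 0 ≤ ℓ) (hs : ℓ + η ≤ exp (-κs)) (hu : exp κu + η ≤ μ)
    (hA : ∀ u u', μ * ‖u - u'‖ ≤ ‖A u - A u'‖)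
    (hB : ∀ v v', ‖B v - B v'‖ ≤ ℓ * ‖v - v'‖)
    (hg : ∀ x y, ‖(g x - Prod.map A B x) - (g y - Prod.map A B y)‖ ≤ η * ‖x - y‖)
    (x y : U × S) :
    DominatedStep κs κu ‖(x - y).1‖ ‖(x - y).2‖ ‖(g x - g y).1‖ ‖(g x - g y).2‖ := by
  have herr := hg x y
  rw [sub_sub_sub_comm] at herr
  have hfst : ‖(g x - g y).1 - (A x.1 - A y.1)‖ ≤ η * ‖x - y‖ := (norm_fst_le _).trans herr
  have hsnd : ‖(g x - g y).2 - (B x.2 - B y.2)‖ ≤ η * ‖x - y‖ := (norm_snd_le _).trans herr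
  refine ⟨?_, fun hcone => ?_⟩
  · rw [← Prod.norm_def]
    calc
      ‖(g x - g y).2‖ ≤ ‖B x.2 - B y.2‖ + ‖(g x - g y).2 - (B x.2 - B y.2)‖ :=
        norm_le_norm_add_norm_sub' _ _
      _ ≤ ℓ * ‖(x - y).2‖ + η * ‖x - y‖ := add_le_add (hB _ _) hsnd
      _ ≤ ℓ * ‖x - y‖ + η * ‖x - y‖ := by gcongr; exact norm_snd_le _
      _ = (ℓ + η) * ‖x - y‖ := (add_mul _ _ _).symm
      _ ≤ exp (-κs) * ‖x - y‖ := by gcongr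
  · rw [Prod.norm_def, max_eq_left hcone] at hfst
    have hexpand : μ * ‖(x - y).1‖ ≤ ‖(g x - g y).1‖ + η * ‖(x - y).1‖ :=
      calc
        μ * ‖(x - y).1‖ ≤ ‖A x.1 - A y.1‖ := hA _ _
        _ ≤ ‖(g x - g y).1‖ + ‖(g x - g y).1 - (A x.1 - A y.1)‖ := norm_le_norm_add_norm_sub _ _
        _ ≤ ‖(g x - g y).1‖ + η * ‖(x - y).1‖ := by gcongr
    calc
      exp κu * ‖(x - y).1‖ ≤ (μ - η) * ‖(x - y).1‖ := by gcongr; linarith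
      _ ≤ ‖(g x - g y).1‖ := by linarith

theorem shadowing_sequence_two_point_estimate_general {U S : ℤ → Type*}
    [∀ n, SeminormedAddCommGroup (U n)] [∀ n, SeminormedAddCommGroup (S n)]
    {ℓ μ η κs κu : ℝ} (hκ : 0 ≤ κs + κu)
    (hℓ : 0 ≤ ℓ) (hs : ℓ + η ≤ exp (-κs)) (hu : exp κu + η ≤ μ) {n₁ n₂ : ℤ}
    {A : ∀ n, U n → U (n + 1)} {B : ∀ n, S n → S (n + 1)}
    {g : ∀ n, U n × S n → U (n + 1) × S (n + 1)}
    (hA : ∀ n, n₁ ≤ n → n < n₂ → ∀ u u', μ * ‖u - u'‖ ≤ ‖A n u - A n u'‖)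
    (hB : ∀ n, n₁ ≤ n → n < n₂ → ∀ v v', ‖B n v - B n v'‖ ≤ ℓ * ‖v - v'‖)
    (hg : ∀ n, n₁ ≤ n → n < n₂ → ∀ x y,
      ‖(g n x - Prod.map (A n) (B n) x) - (g n y - Prod.map (A n) (B n) y)‖ ≤ η * ‖x - y‖)
    {y z : ∀ n, U n × S n}
    (hy : ∀ n, n₁ ≤ n → n < n₂ → g n (y n) = y (n + 1))
    (hz : ∀ n, n₁ ≤ n → n < n₂ → g n (z n) = z (n + 1))
    {k : ℤ} (hk₁ : n₁ ≤ k) (hk₂ : k ≤ n₂) :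
    ‖z k - y k‖ ≤ exp (-κs * ((k - n₁ : ℤ) : ℝ)) * ‖z n₁ - y n₁‖ +
      exp (-κu * ((n₂ - k : ℤ) : ℝ)) * ‖z n₂ - y n₂‖ := by
  have hstep : ∀ n, n₁ ≤ n → n < n₂ → DominatedStep κs κu ‖(z n - y n).1‖ ‖(z n - y n).2‖
      ‖(z (n + 1) - y (n + 1)).1‖ ‖(z (n + 1) - y (n + 1)).2‖ := fun n h₁ h₂ => by
    rw [← hy n h₁ h₂, ← hz n h₁ h₂]
    exact dominatedStep_of_perturbation hℓ hs hu (hA n h₁ h₂) (hB n h₁ h₂) (hg n h₁ h₂) _ _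
  simpa only [← Prod.norm_def] using max_le_of_dominatedStep
    (a := fun n => ‖(z n - y n).1‖) (b := fun n => ‖(z n - y n).2‖)
    hκ (fun _ => norm_nonneg _) hstep hk₁ hk₂

lemma exp_add_exp_neg_sub_exp_neg_le {x y : ℝ} (hxy : |x| ≤ |y|) :
    exp x + (exp (-x) - exp (-y)) ≤ exp y := by
  have hcosh : cosh x ≤ cosh y := cosh_le_cosh.2 hxy
  rw [cosh_eq, cosh_eq] at hcosh
  linarith

lemma exp_mul_norm_sub_le_norm_map_sub {E F 𝓕 : Type*} [SeminormedAddCommGroup E]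
    [SeminormedAddCommGroup F] [FunLike 𝓕 E F] [AddMonoidHomClass 𝓕 E F] {f : 𝓕} {κ : ℝ}
    (hf : ∀ x, ‖x‖ ≤ exp (-κ) * ‖f x‖) (x y : E) : exp κ * ‖x - y‖ ≤ ‖f x - f y‖ := by
  rw [← map_sub, ← le_inv_mul_iff₀ (exp_pos κ), ← exp_neg]
  exact hf (x - y)

/-- **Shadowing for sequences of hyperbolic maps: exponential two-point comparison.**
On `E = ℝ^{d_u} × ℝ^{d_s}` with the max norm, for all `0 < κ < κ₀` there is `η₀ > 0` such
that for any finite block of block-hyperbolic linear maps `L_n = L_n^u × L_n^s` (with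
`‖(L_n^u)⁻¹‖ ≤ e^{−κ₀}`, `‖L_n^s‖ ≤ e^{−κ₀}`) and maps `g_n` with `g_n − L_n` Lipschitz of
constant `η₀`, any two orbit segments `(y_n)`, `(z_n)` of `(g_n)` on `[n₁, n₂]` satisfy the
exponential comparison estimate at every intermediate time. -/
theorem shadowing_sequence_two_point_estimate (du ds : ℕ) (κ κ₀ : ℝ)
    (h0 : 0 < κ) (h1 : κ < κ₀) :
    ∃ η₀ : ℝ, 0 < η₀ ∧
      ∀ n₁ n₂ : ℤ, n₁ ≤ n₂ →
      ∀ (Lu : ℤ → (EuclideanSpace ℝ (Fin du) →L[ℝ] EuclideanSpace ℝ (Fin du)))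
        (Ls : ℤ → (EuclideanSpace ℝ (Fin ds) →L[ℝ] EuclideanSpace ℝ (Fin ds)))
        (g : ℤ → (EuclideanSpace ℝ (Fin du) × EuclideanSpace ℝ (Fin ds)) →
            (EuclideanSpace ℝ (Fin du) × EuclideanSpace ℝ (Fin ds))),
        (∀ n, n₁ ≤ n → n < n₂ → Function.Bijective (Lu n)) →
        (∀ n, n₁ ≤ n → n < n₂ → ∀ u : EuclideanSpace ℝ (Fin du),
          ‖u‖ ≤ Real.exp (-κ₀) * ‖Lu n u‖) →
        (∀ n, n₁ ≤ n → n < n₂ → ‖Ls n‖ ≤ Real.exp (-κ₀)) →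
        (∀ n, n₁ ≤ n → n < n₂ →
          ∀ x y : EuclideanSpace ℝ (Fin du) × EuclideanSpace ℝ (Fin ds),
          ‖(g n x - (ContinuousLinearMap.prodMap (Lu n) (Ls n)) x) -
            (g n y - (ContinuousLinearMap.prodMap (Lu n) (Ls n)) y)‖ ≤ η₀ * ‖x - y‖) →
        ∀ y z : ℤ → EuclideanSpace ℝ (Fin du) × EuclideanSpace ℝ (Fin ds),
          (∀ n, n₁ ≤ n → n < n₂ → g n (y n) = y (n + 1)) →
          (∀ n, n₁ ≤ n → n < n₂ → g n (z n) = z (n + 1)) →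
          ∀ k : ℤ, n₁ ≤ k → k ≤ n₂ →
            ‖z k - y k‖ ≤
              Real.exp (-κ * ((k - n₁ : ℤ) : ℝ)) * ‖z n₁ - y n₁‖ +
              Real.exp (-κ * ((n₂ - k : ℤ) : ℝ)) * ‖z n₂ - y n₂‖ := by
  exact ⟨exp (-κ) - exp (-κ₀), sub_pos.2 (exp_lt_exp.2 (neg_lt_neg h1)),
    fun n₁ n₂ _ Lu Ls g _ hLu hLs hg y z hy hz k => shadowing_sequence_two_point_estimate_general
      (A := fun n => Lu n) (B := fun n => Ls n) (add_nonneg h0.le h0.le) (exp_pos (-κ₀)).le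
      (add_sub_cancel _ _).le (exp_add_exp_neg_sub_exp_neg_le (abs_le_abs_of_nonneg h0.le h1.le))
      (fun n h h' => exp_mul_norm_sub_le_norm_map_sub (hLu n h h'))
      (fun n h h' v v' => map_sub (Ls n) v v' ▸ (Ls n).le_of_opNorm_le (hLs n h h') (v - v'))
      hg hy hz⟩
end

section
/- Let 𝒜 be a finite set, σ the shift on 𝒜^ℤ, and Σ ⊆ 𝒜^ℤ a nonempty closed set with σ(Σ) = Σ. Let d ≥ 1 and let A : Σ → GL(d,ℝ) be continuous. For n ≥ 1 write A_n(x) = A(σ^{n−1}x)·⋯·A(σx)·A(x), and say that x, y ∈ Σ are on the same local stable set if x_i = y_i for all i ≥ 0. Assume there exist constants C > 0 and ε > 0 such that for all x, y ∈ Σ on the same local stable set and all n ≥ 0: ‖A_n(x)‖ · ‖A_n(x)⁻¹‖ · ‖A(σ^n x) − A(σ^n y)‖ < C·e^{−εn}. Then for all x, y ∈ Σ on the same local stable set, the limit H_s(x,y) := lim_{n→∞} A_n(y)⁻¹·A_n(x) exists and is an invertible matrix, and these limits satisfy: H_s(y,z)·H_s(x,y) = H_s(x,z) whenever x, y, z are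 pairwise on the same local stable set; H_s(σ(x), σ(y))·A(x) = A(y)·H_s(x,y) for all x, y on the same local stable set; and the map (x,y) ↦ H_s(x,y) is continuous on the set of pairs (x,y) ∈ Σ × Σ on the same local stable set. -/
/-!
With `P_n(x, y) = A_n(y)⁻¹ A_n(x)` one has `A_n(y)⁻¹ = P_n A_n(x)⁻¹`, hence
`P_{n+1} - P_n = P_n · A_n(x)⁻¹ A(fⁿy)⁻¹ (A(fⁿx) - A(fⁿy)) A_n(x)`,
where only the conditioning of `A_n` at the point `x` enters. As `‖A⁻¹‖` is bounded, the bunching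
condition makes the relative increments of `P_n` uniformly summable. By the discrete Grönwall
inequality `P_n` is bounded, so the increments themselves are uniformly summable and `P_n` converges
uniformly. The limit is therefore continuous and inherits the algebraic identities of the `P_n`;
in particular `H(y, x)` inverts `H(x, y)`.
-/

/-- The left shift on bi-infinite sequences. -/
def seqShift {A : Type*} (x : ℤ → A) : ℤ → A := fun n => x (n + 1)

/-- Two sequences lie on the same local stable set if they agree in all coordinates `i ≥ 0`. -/
def SameLocalStable {A : Type*} (x y : ℤ → A) : Prop := ∀ i : ℤ, 0 ≤ i → x i = y i

/-- The cocycle products `A_n(x) = A(σ^{n−1}x)·⋯·A(σx)·A(x)`. -/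
noncomputable def cocycleProd {A : Type*} {d : ℕ}
    (Ac : (ℤ → A) → (EuclideanSpace ℝ (Fin d) →L[ℝ] EuclideanSpace ℝ (Fin d))) :
    ℕ → (ℤ → A) → (EuclideanSpace ℝ (Fin d) →L[ℝ] EuclideanSpace ℝ (Fin d))
  | 0, _ => 1
  | n + 1, x => Ac (seqShift^[n] x) * cocycleProd Ac n x

open Filter Function Set Topology
open scoped Ring

section UniformLimits

variable {α E : Type*} {P : ℕ → α → E} {s : Set α}

lemma tendstoUniformlyOn_limUnder_of_dist_le [PseudoMetricSpace E] [CompleteSpace E] [Nonempty E]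
    {u : ℕ → ℝ} (hu : Summable u) (hP : ∀ n, ∀ p ∈ s, dist (P n p) (P (n + 1) p) ≤ u n) :
    TendstoUniformlyOn P (fun p => limUnder atTop (P · p)) atTop s := by
  have hlim : ∀ p ∈ s, Tendsto (P · p) atTop (𝓝 (limUnder atTop (P · p))) := fun p hp =>
    (cauchySeq_of_dist_le_of_summable u (hP · p hp) hu).tendsto_limUnder
  rw [Metric.tendstoUniformlyOn_iff]
  intro δ hδ
  filter_upwards [(tendsto_sum_nat_add u).eventually_lt_const hδ] with n hn p hp
  rw [dist_comm]
  calc dist (P n p) (limUnder atTop (P · p))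
      ≤ ∑' m, u (n + m) := dist_le_tsum_of_dist_le_of_tendsto u (hP · p hp) hu (hlim p hp) n
    _ = ∑' m, u (m + n) := by simp only [add_comm]
    _ < δ := hn

lemma norm_le_mul_exp_tsum_of_norm_sub_le [SeminormedAddCommGroup E] {v : ℕ → E} {c : ℕ → ℝ}
    (hc : Summable c) (hc₀ : ∀ n, 0 ≤ c n) (hv : ∀ n, ‖v (n + 1) - v n‖ ≤ c n * ‖v n‖) (n : ℕ) :
    ‖v n‖ ≤ ‖v 0‖ * Real.exp (∑' k, c k) := by
  have hgrowth : ∀ k, ‖v (k + 1)‖ ≤ (1 + c k) * ‖v k‖ + 0 := fun k => by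
    linarith [hv k, norm_le_norm_add_norm_sub' (v (k + 1)) (v k)]
  calc ‖v n‖ ≤ (‖v 0‖ + ∑ k ∈ Finset.Ico 0 n, 0) * Real.exp (∑ k ∈ Finset.Ico 0 n, c k) :=
        discrete_gronwall (u := fun k => ‖v k‖) (norm_nonneg _) (fun k _ => hgrowth k)
          (fun k _ => hc₀ k) (fun _ _ => le_rfl) n.zero_le
    _ = ‖v 0‖ * Real.exp (∑ k ∈ Finset.Ico 0 n, c k) := by rw [Finset.sum_const_zero, add_zero]
    _ ≤ ‖v 0‖ * Real.exp (∑' k, c k) := by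
        gcongr
        exact hc.sum_le_tsum _ fun k _ => hc₀ k

lemma tendstoUniformlyOn_limUnder_of_norm_sub_le_mul_norm [SeminormedAddCommGroup E]
    [CompleteSpace E] {c : ℕ → ℝ} {M : ℝ} (hc : Summable c) (hP₀ : ∀ p ∈ s, ‖P 0 p‖ ≤ M)
    (hP : ∀ n, ∀ p ∈ s, ‖P (n + 1) p - P n p‖ ≤ c n * ‖P n p‖) :
    TendstoUniformlyOn P (fun p => limUnder atTop (P · p)) atTop s := by
  have hrel : ∀ n, ∀ p ∈ s, ‖P (n + 1) p - P n p‖ ≤ |c n| * ‖P n p‖ := fun n p hp =>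
    (hP n p hp).trans (by gcongr; exact le_abs_self _)
  refine tendstoUniformlyOn_limUnder_of_dist_le
    (hc.abs.mul_right (M * Real.exp (∑' k, |c k|))) fun n p hp => ?_
  calc dist (P n p) (P (n + 1) p) = ‖P (n + 1) p - P n p‖ := by rw [dist_comm, dist_eq_norm]
    _ ≤ |c n| * ‖P n p‖ := hrel n p hp
    _ ≤ |c n| * (‖P 0 p‖ * Real.exp (∑' k, |c k|)) := by
        gcongr
        exact norm_le_mul_exp_tsum_of_norm_sub_le (v := (P · p)) hc.abs (fun _ => abs_nonneg _)
          (hrel · p hp) n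
    _ ≤ |c n| * (M * Real.exp (∑' k, |c k|)) := by
        gcongr
        exact hP₀ p hp

end UniformLimits

section RingInverse

variable {R : Type*} [NormedRing R] [HasSummableGeomSeries R]

lemma continuousOn_ringInverse : ContinuousOn Ring.inverse {a : R | IsUnit a} := by
  rintro _ ⟨u, rfl⟩
  exact (NormedRing.inverse_continuousAt u).continuousWithinAt

lemma exists_norm_ringInverse_le {X : Type*} [TopologicalSpace X] {S : Set X}
    {A : X → R} (hS : IsCompact S) (hA : ContinuousOn A S) (hunit : ∀ x ∈ S, IsUnit (A x)) :
    ∃ K, ∀ x ∈ S, ‖(A x)⁻¹ʳ‖ ≤ K :=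
  hS.exists_bound_of_continuousOn (continuousOn_ringInverse.comp hA hunit)

end RingInverse

section OrbitProd

variable {X R : Type*} {f : X → X} {A : X → R}

/-- The product `A(f^{n-1} x) ⋯ A(f x) A(x)` of `A` along the first `n` points of the orbit of `x`
under `f`, i.e. the `n`-th iterate of the linear cocycle generated by `A` over `f`. -/
def orbitProd [Monoid R] (f : X → X) (A : X → R) : ℕ → X → R
  | 0, _ => 1
  | n + 1, x => A (f^[n] x) * orbitProd f A n x

lemma orbitProd_succ' [Monoid R] (n : ℕ) (x : X) :
    orbitProd f A (n + 1) x = orbitProd f A n (f x) * A x := by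
  induction n with
  | zero => simp only [orbitProd, iterate_zero_apply, mul_one, one_mul]
  | succ n ih => rw [orbitProd, ih, orbitProd, iterate_succ_apply, mul_assoc]

lemma isUnit_orbitProd [Monoid R] {S : Set X} (hf : MapsTo f S S)
    (hunit : ∀ x ∈ S, IsUnit (A x)) (n : ℕ) {x : X} (hx : x ∈ S) : IsUnit (orbitProd f A n x) := by
  induction n with
  | zero => exact isUnit_one
  | succ n ih => exact (hunit _ (hf.iterate n hx)).mul ih

lemma continuousOn_orbitProd [Monoid R] [TopologicalSpace X] [TopologicalSpace R]
    [ContinuousMul R] {S : Set X} (hfc : ContinuousOn f S) (hf : MapsTo f S S)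
    (hA : ContinuousOn A S) (n : ℕ) : ContinuousOn (orbitProd f A n) S := by
  induction n with
  | zero => exact continuousOn_const
  | succ n ih => exact (hA.comp (hfc.iterate hf n) (hf.iterate n)).mul ih

end OrbitProd

section HolonomyApprox

variable {X R : Type*} {f : X → X} {A : X → R} {n : ℕ} {x y : X}

/-- The `n`-th approximation `A_n(y)⁻¹ A_n(x)` to the stable holonomy from `x` to `y`. -/
noncomputable def holonomyApprox [MonoidWithZero R] (f : X → X) (A : X → R) (n : ℕ) (x y : X) : R :=
  (orbitProd f A n y)⁻¹ʳ * orbitProd f A n x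

lemma holonomyApprox_zero [MonoidWithZero R] : holonomyApprox f A 0 x y = 1 := by
  simp only [holonomyApprox, orbitProd, Ring.inverse_one, mul_one]

lemma holonomyApprox_self [MonoidWithZero R] (hx : IsUnit (orbitProd f A n x)) :
    holonomyApprox f A n x x = 1 :=
  Ring.inverse_mul_cancel _ hx

lemma holonomyApprox_mul_holonomyApprox [MonoidWithZero R] (hy : IsUnit (orbitProd f A n y))
    (x z : X) : holonomyApprox f A n y z * holonomyApprox f A n x y = holonomyApprox f A n x z := by
  simp only [holonomyApprox, mul_assoc, Ring.mul_inverse_cancel_left _ _ hy]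

lemma holonomyApprox_map [MonoidWithZero R] (hx : IsUnit (A x)) (hy : IsUnit (A y)) :
    holonomyApprox f A n (f x) (f y) = A y * holonomyApprox f A (n + 1) x y * (A x)⁻¹ʳ := by
  simp only [holonomyApprox, orbitProd_succ', Ring.inverse_mul (Or.inr hy), mul_assoc,
    Ring.mul_inverse_cancel_left _ _ hy, Ring.mul_inverse_cancel _ hx, mul_one]

lemma holonomyApprox_succ_sub [Ring R] (hx : IsUnit (orbitProd f A n x))
    (hy : IsUnit (A (f^[n] y))) :
    holonomyApprox f A (n + 1) x y - holonomyApprox f A n x y =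
      holonomyApprox f A n x y * ((orbitProd f A n x)⁻¹ʳ * ((A (f^[n] y))⁻¹ʳ *
        (A (f^[n] x) - A (f^[n] y))) * orbitProd f A n x) := by
  simp only [holonomyApprox, orbitProd, Ring.inverse_mul (Or.inl hy), mul_sub, sub_mul, mul_assoc,
    Ring.mul_inverse_cancel_left _ _ hx, Ring.inverse_mul_cancel_left _ _ hy]

lemma norm_holonomyApprox_succ_sub_le [NormedRing R] (hx : IsUnit (orbitProd f A n x))
    (hy : IsUnit (A (f^[n] y))) :
    ‖holonomyApprox f A (n + 1) x y - holonomyApprox f A n x y‖ ≤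
      ‖(A (f^[n] y))⁻¹ʳ‖ * (‖orbitProd f A n x‖ * ‖(orbitProd f A n x)⁻¹ʳ‖ *
        ‖A (f^[n] x) - A (f^[n] y)‖) * ‖holonomyApprox f A n x y‖ := by
  rw [holonomyApprox_succ_sub hx hy]
  calc _ ≤ ‖holonomyApprox f A n x y‖ * (‖(orbitProd f A n x)⁻¹ʳ‖ * (‖(A (f^[n] y))⁻¹ʳ‖ *
        ‖A (f^[n] x) - A (f^[n] y)‖) * ‖orbitProd f A n x‖) :=
        norm_mul_le_of_le le_rfl <| norm_mul_le_of_le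
          (norm_mul_le_of_le le_rfl (norm_mul_le _ _)) le_rfl
    _ = _ := by ring

lemma continuousOn_holonomyApprox [TopologicalSpace X] [NormedRing R] [HasSummableGeomSeries R]
    {S : Set X} (hfc : ContinuousOn f S) (hf : MapsTo f S S) (hA : ContinuousOn A S)
    (hunit : ∀ x ∈ S, IsUnit (A x)) (n : ℕ) :
    ContinuousOn (fun p : X × X => holonomyApprox f A n p.1 p.2) (S ×ˢ S) := by
  have hprod := continuousOn_orbitProd hfc hf hA n
  have hinv : ContinuousOn (fun x => (orbitProd f A n x)⁻¹ʳ) S :=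
    continuousOn_ringInverse.comp hprod fun _ hx => isUnit_orbitProd hf hunit n hx
  exact (hinv.comp continuousOn_snd fun _ hp => hp.2).mul
    (hprod.comp continuousOn_fst fun _ hp => hp.1)

end HolonomyApprox

section StableHolonomy

variable {X R : Type*} {f : X → X} {A : X → R} {x y z : X}

/-- The stable holonomy `H(x, y) = lim A_n(y)⁻¹ A_n(x)` of the cocycle generated by `A` over `f`;
an arbitrary value where the limit does not exist. -/
noncomputable def stableHolonomy [MonoidWithZero R] [TopologicalSpace R] (f : X → X) (A : X → R)
    (x y : X) : R :=
  limUnder atTop fun n => holonomyApprox f A n x y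

section Algebra

variable [MonoidWithZero R] [TopologicalSpace R] [T2Space R]

lemma stableHolonomy_self (hx : ∀ n, IsUnit (orbitProd f A n x)) : stableHolonomy f A x x = 1 :=
  (tendsto_const_nhds.congr fun n => (holonomyApprox_self (hx n)).symm).limUnder_eq

variable [ContinuousMul R]

lemma stableHolonomy_mul_stableHolonomy (hy : ∀ n, IsUnit (orbitProd f A n y))
    (hxy : Tendsto (holonomyApprox f A · x y) atTop (𝓝 (stableHolonomy f A x y)))
    (hyz : Tendsto (holonomyApprox f A · y z) atTop (𝓝 (stableHolonomy f A y z))) :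
    stableHolonomy f A y z * stableHolonomy f A x y = stableHolonomy f A x z :=
  ((hyz.mul hxy).congr fun n => holonomyApprox_mul_holonomyApprox (hy n) x z).limUnder_eq.symm

lemma isUnit_stableHolonomy (hx : ∀ n, IsUnit (orbitProd f A n x))
    (hy : ∀ n, IsUnit (orbitProd f A n y))
    (hxy : Tendsto (holonomyApprox f A · x y) atTop (𝓝 (stableHolonomy f A x y)))
    (hyx : Tendsto (holonomyApprox f A · y x) atTop (𝓝 (stableHolonomy f A y x))) :
    IsUnit (stableHolonomy f A x y) :=
  isUnit_iff_exists.2 ⟨stableHolonomy f A y x,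
    (stableHolonomy_mul_stableHolonomy hx hyx hxy).trans (stableHolonomy_self hy),
    (stableHolonomy_mul_stableHolonomy hy hxy hyx).trans (stableHolonomy_self hx)⟩

lemma stableHolonomy_map_mul (hx : IsUnit (A x)) (hy : IsUnit (A y))
    (hxy : Tendsto (holonomyApprox f A · x y) atTop (𝓝 (stableHolonomy f A x y))) :
    stableHolonomy f A (f x) (f y) * A x = A y * stableHolonomy f A x y := by
  have hmap : stableHolonomy f A (f x) (f y) = A y * stableHolonomy f A x y * (A x)⁻¹ʳ :=
    ((((hxy.comp (tendsto_add_atTop_nat 1)).const_mul (A y)).mul_const (A x)⁻¹ʳ).congr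
      fun n => (holonomyApprox_map hx hy).symm).limUnder_eq
  rw [hmap, Ring.inverse_mul_cancel_right _ _ hx]

end Algebra

lemma tendstoUniformlyOn_stableHolonomy [NormedRing R] [CompleteSpace R] {s : Set (X × X)}
    {K : ℝ} {b : ℕ → ℝ} (hb : Summable b)
    (hx : ∀ p ∈ s, ∀ n, IsUnit (orbitProd f A n p.1))
    (hy : ∀ p ∈ s, ∀ n, IsUnit (A (f^[n] p.2)))
    (hK : ∀ p ∈ s, ∀ n, ‖(A (f^[n] p.2))⁻¹ʳ‖ ≤ K)
    (hbunch : ∀ p ∈ s, ∀ n, ‖orbitProd f A n p.1‖ * ‖(orbitProd f A n p.1)⁻¹ʳ‖ *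
      ‖A (f^[n] p.1) - A (f^[n] p.2)‖ ≤ b n) :
    TendstoUniformlyOn (fun n p => holonomyApprox f A n p.1 p.2)
      (fun p => stableHolonomy f A p.1 p.2) atTop s := by
  refine tendstoUniformlyOn_limUnder_of_norm_sub_le_mul_norm (M := ‖(1 : R)‖) (hb.mul_left K)
    (fun p _ => by rw [holonomyApprox_zero]) fun n p hp => ?_
  have hK₀ : 0 ≤ K := (norm_nonneg _).trans (hK p hp n)
  refine (norm_holonomyApprox_succ_sub_le (hx p hp n) (hy p hp n)).trans ?_
  gcongr
  exacts [hK p hp n, hbunch p hp n]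

theorem stable_holonomies_of_fiber_bunched_cocycle_general [TopologicalSpace X] [NormedRing R]
    [CompleteSpace R] {S : Set X} {r : X → X → Prop} {K : ℝ} {b : ℕ → ℝ}
    (hfc : ContinuousOn f S) (hf : MapsTo f S S) (hr : ∀ ⦃x y⦄, r x y → r y x)
    (hA : ContinuousOn A S) (hunit : ∀ x ∈ S, IsUnit (A x)) (hK : ∀ x ∈ S, ‖(A x)⁻¹ʳ‖ ≤ K)
    (hb : Summable b)
    (hbunch : ∀ x ∈ S, ∀ y ∈ S, r x y → ∀ n, ‖orbitProd f A n x‖ * ‖(orbitProd f A n x)⁻¹ʳ‖ *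
      ‖A (f^[n] x) - A (f^[n] y)‖ ≤ b n) :
    (∀ x ∈ S, ∀ y ∈ S, r x y →
      Tendsto (holonomyApprox f A · x y) atTop (𝓝 (stableHolonomy f A x y)) ∧
        IsUnit (stableHolonomy f A x y)) ∧
    (∀ x ∈ S, ∀ y ∈ S, ∀ z ∈ S, r x y → r y z →
      stableHolonomy f A y z * stableHolonomy f A x y = stableHolonomy f A x z) ∧
    (∀ x ∈ S, ∀ y ∈ S, r x y →
      stableHolonomy f A (f x) (f y) * A x = A y * stableHolonomy f A x y) ∧
    ContinuousOn (fun p : X × X => stableHolonomy f A p.1 p.2)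
      {p | p.1 ∈ S ∧ p.2 ∈ S ∧ r p.1 p.2} := by
  have hprod : ∀ x ∈ S, ∀ n, IsUnit (orbitProd f A n x) := fun _ hx n =>
    isUnit_orbitProd hf hunit n hx
  have hunif : TendstoUniformlyOn (fun n p => holonomyApprox f A n p.1 p.2)
      (fun p => stableHolonomy f A p.1 p.2) atTop {p : X × X | p.1 ∈ S ∧ p.2 ∈ S ∧ r p.1 p.2} :=
    tendstoUniformlyOn_stableHolonomy hb (fun p hp => hprod p.1 hp.1)
      (fun p hp n => hunit _ (hf.iterate n hp.2.1)) (fun p hp n => hK _ (hf.iterate n hp.2.1))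
      fun p hp => hbunch p.1 hp.1 p.2 hp.2.1 hp.2.2
  have hlim : ∀ x ∈ S, ∀ y ∈ S, r x y →
      Tendsto (holonomyApprox f A · x y) atTop (𝓝 (stableHolonomy f A x y)) :=
    fun x hx y hy hxy => hunif.tendsto_at (x := (x, y)) ⟨hx, hy, hxy⟩
  refine ⟨fun x hx y hy hxy => ⟨hlim x hx y hy hxy, ?_⟩, fun x hx y hy z hz hxy hyz => ?_,
    fun x hx y hy hxy => ?_, ?_⟩
  · exact isUnit_stableHolonomy (hprod x hx) (hprod y hy) (hlim x hx y hy hxy)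
      (hlim y hy x hx (hr hxy))
  · exact stableHolonomy_mul_stableHolonomy (hprod y hy) (hlim x hx y hy hxy) (hlim y hy z hz hyz)
  · exact stableHolonomy_map_mul (hunit x hx) (hunit y hy) (hlim x hx y hy hxy)
  · exact hunif.continuousOn <| Frequently.of_forall fun n =>
      (continuousOn_holonomyApprox hfc hf hA hunit n).mono fun p hp => ⟨hp.1, hp.2.1⟩

end StableHolonomy

section Shift

variable {A : Type*}

lemma SameLocalStable.symm {x y : ℤ → A} (h : SameLocalStable x y) : SameLocalStable y x :=
  fun i hi => (h i hi).symm

lemma continuous_seqShift [TopologicalSpace A] : Continuous (seqShift : (ℤ → A) → ℤ → A) :=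
  continuous_pi fun n => continuous_apply (n + 1)

lemma cocycleProd_eq_orbitProd {d : ℕ}
    (Ac : (ℤ → A) → (EuclideanSpace ℝ (Fin d) →L[ℝ] EuclideanSpace ℝ (Fin d))) :
    cocycleProd Ac = orbitProd seqShift Ac := by
  funext n x
  induction n with
  | zero => rfl
  | succ n ih => rw [cocycleProd, orbitProd, ih]

end Shift

/-- **Fiber bunching yields stable holonomies (Bonatti–Gómez-Mont–Viana).**
Let `Σ` be a subshift and `A : Σ → GL(d,ℝ)` a continuous cocycle satisfying the bunching
condition `‖A_n(x)‖·‖A_n(x)⁻¹‖·‖A(σⁿx) − A(σⁿy)‖ < C·e^{−εn}` along local stable sets.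
Then the stable holonomies `H_s(x,y) = lim_n A_n(y)⁻¹·A_n(x)` exist, are invertible,
satisfy the cocycle identities `H_s(y,z)∘H_s(x,y) = H_s(x,z)` and
`H_s(σx,σy)∘A(x) = A(y)∘H_s(x,y)`, and depend continuously on `(x,y)`. -/
theorem stable_holonomies_of_fiber_bunched_cocycle
    {A : Type*} [Fintype A] [TopologicalSpace A] [DiscreteTopology A]
    (S : Set (ℤ → A)) (hSne : S.Nonempty) (hScl : IsClosed S)
    (hSinv : seqShift '' S = S)
    (d : ℕ) (hd : 1 ≤ d)
    (Ac : (ℤ → A) → (EuclideanSpace ℝ (Fin d) →L[ℝ] EuclideanSpace ℝ (Fin d)))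
    (hAcont : ContinuousOn Ac S)
    (hAunit : ∀ x ∈ S, IsUnit (Ac x))
    (C ε : ℝ) (hC : 0 < C) (hε : 0 < ε)
    (hbunch : ∀ x ∈ S, ∀ y ∈ S, SameLocalStable x y → ∀ n : ℕ,
      ‖cocycleProd Ac n x‖ * ‖Ring.inverse (cocycleProd Ac n x)‖ *
        ‖Ac (seqShift^[n] x) - Ac (seqShift^[n] y)‖ < C * Real.exp (-ε * n)) :
    ∃ Hs : (ℤ → A) → (ℤ → A) →
        (EuclideanSpace ℝ (Fin d) →L[ℝ] EuclideanSpace ℝ (Fin d)),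
      (∀ x ∈ S, ∀ y ∈ S, SameLocalStable x y →
        Filter.Tendsto
          (fun n => Ring.inverse (cocycleProd Ac n y) * cocycleProd Ac n x)
          Filter.atTop (nhds (Hs x y)) ∧ IsUnit (Hs x y)) ∧
      (∀ x ∈ S, ∀ y ∈ S, ∀ z ∈ S,
        SameLocalStable x y → SameLocalStable y z → SameLocalStable x z →
        Hs y z * Hs x y = Hs x z) ∧
      (∀ x ∈ S, ∀ y ∈ S, SameLocalStable x y →
        Hs (seqShift x) (seqShift y) * Ac x = Ac y * Hs x y) ∧
      ContinuousOn (fun p : (ℤ → A) × (ℤ → A) => Hs p.1 p.2)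
        {p | p.1 ∈ S ∧ p.2 ∈ S ∧ SameLocalStable p.1 p.2} := by
  rw [cocycleProd_eq_orbitProd] at hbunch ⊢
  obtain ⟨K, hK⟩ := exists_norm_ringInverse_le hScl.isCompact hAcont hAunit
  obtain ⟨hlim, hmul, hmap, hcont⟩ := stable_holonomies_of_fiber_bunched_cocycle_general
    continuous_seqShift.continuousOn (mapsTo_iff_image_subset.2 hSinv.subset)
    (fun _ _ => SameLocalStable.symm) hAcont hAunit hK
    ((Real.summable_exp_nat_mul_of_ge (neg_lt_zero.2 hε) fun _ => le_rfl).mul_left C)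
    fun x hx y hy hxy n => (hbunch x hx y hy hxy n).le
  exact ⟨stableHolonomy seqShift Ac, hlim,
    fun x hx y hy z hz hxy hyz _ => hmul x hx y hy z hz hxy hyz, hmap, hcont⟩
end

section
/- Let (M, dist) be a compact metric space, f : M → M a homeomorphism, and μ an ergodic f-invariant Borel probability measure. Let ψ₁, …, ψ_k : M → ℝ be continuous functions, let γ > 0, δ > 0, ε > 0, let X ⊆ M be compact with μ(X) > 0, and let ρ > 0 be such that dist(x,y) < ρ implies |ψ_i(x) − ψ_i(y)| < γ/2 for every i. Suppose there exist h ≥ 0, ξ > 0 with ξ·(h + 4) < δ, and N₀ ∈ ℕ such that for every n ≥ N₀ and every Borel set Z ⊆ X with μ(Z) ≥ μ(X)/2 there exists a finite subset S ⊆ Z of cardinality at least e^{n(h−ξ)} whose points are (n,ρ)-separated. Then there exist an integer N ≥ N₀, a point p ∈ X, and a finite set Y ⊆ X ∩ B(p, ε/2) such that: (i) distinct points of Y are (N,ρ)-separated; (ii) f^N(Y) ⊆ X ∩ B(p, ε/2); (iii) for every y ∈ Y and every i ∈ {1,…,k}, |(1/N)·Σ_{j=1}^{N} ψ_i(f^j(y))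 − ∫_M ψ_i dμ| < γ/2; and (iv) the cardinality of Y is at least e^{N(h − δ)}. -/
open MeasureTheory

/-!
The mean ergodic theorem makes Birkhoff averages converge to the space average in measure, and this
is all that is needed. Fix a finite cover of `X` by pieces `Q p = X ∩ B(p, ε)` and look at the times
`N` with `n ≤ N < (1 + θ) n`. For most points the frequency of visits to `Q p` is close to `μ (Q p)`
both at time `n` and at time `(1 + θ) n`, so the orbit visits `Q p` in between. For small `θ`, the
averages of a bounded function move little on this window, so they are close to the space average at
every time of the window as soon as they are at time `n`. Hence at least half of `X` consists of
points that return at some time of the window to a piece they belong to, with good averages.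

The separated subset of this half is sorted by the pair `(p, N)`. There are only `O(n)` such pairs,
so the pigeonhole principle loses a subexponential factor, and comparing `exp (N * b)` with
`exp (n * b)` costs at most `exp (θ * |b| * n)`: both losses are absorbed by the gap between the
exponents `b < a`.
-/

open Filter Topology
open scoped ENNReal

section MeanErgodic

variable {α E : Type*} [MeasurableSpace α] {μ : Measure α} {f : α → α} [NormedAddCommGroup E]

theorem coeFn_birkhoffAverage_compMeasurePreservingₗᵢ [NormedSpace ℝ E] {p : ℝ≥0∞}
    [Fact (1 ≤ p)] (hf : MeasurePreserving f μ μ) (g : Lp E p μ) (n : ℕ) :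
    (birkhoffAverage ℝ (Lp.compMeasurePreservingₗᵢ ℝ f hf : Lp E p μ → Lp E p μ) id n g : Lp E p μ)
      =ᵐ[μ] birkhoffAverage ℝ f g n := by
  have hiterate (k : ℕ) :
      ((Lp.compMeasurePreservingₗᵢ ℝ f hf : Lp E p μ → Lp E p μ)^[k] g : α → E)
        =ᵐ[μ] g ∘ f^[k] :=
    (congrFun (Lp.compMeasurePreserving_iterate (E := E) (p := p) hf k) g).symm ▸
      Lp.coeFn_compMeasurePreserving g (hf.iterate k)
  refine (Lp.coeFn_smul _ _).trans (EventuallyEq.const_smul ?_ _)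
  filter_upwards [Lp.coeFn_fun_finsetSum (Finset.range n) fun k =>
    (Lp.compMeasurePreservingₗᵢ ℝ f hf : Lp E p μ → Lp E p μ)^[k] g,
    ae_all_iff.2 hiterate] with x hsum hx
  exact hsum.trans (Finset.sum_congr rfl fun k _ => hx k)

variable [InnerProductSpace ℝ E] [CompleteSpace E] [IsProbabilityMeasure μ]

/- By ergodicity the fixed vectors of the Koopman operator are the constants, and the orthogonal
projection of `g` to the constants is its integral. -/
theorem tendsto_birkhoffAverage_compMeasurePreservingₗᵢ (hf : Ergodic f μ) (g : Lp E 2 μ) :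
    Tendsto (fun n => birkhoffAverage ℝ
        (Lp.compMeasurePreservingₗᵢ ℝ f hf.toMeasurePreserving : Lp E 2 μ → Lp E 2 μ) id n g)
      atTop (𝓝 (Lp.const 2 μ (∫ x, g x ∂μ))) := by
  let U : Lp E 2 μ →ₗᵢ[ℝ] Lp E 2 μ := Lp.compMeasurePreservingₗᵢ ℝ f hf.toMeasurePreserving
  let K := U.toContinuousLinearMap.eqLocus (1 : Lp E 2 μ →L[ℝ] Lp E 2 μ)
  have inner_const (c : E) (v : Lp E 2 μ) :
      inner ℝ (Lp.const 2 μ c) v = inner ℝ c (∫ x, v x ∂μ) := by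
    simpa only [indicatorConstLp_univ, setIntegral_univ] using
      L2.inner_indicatorConstLp_eq_inner_setIntegral ℝ MeasurableSet.univ (measure_ne_top μ _) c v
  have exists_eq_const {w : Lp E 2 μ} (hw : U w = w) : ∃ c, w = Lp.const 2 μ c := by
    have hinv : (w : α → E) ∘ f =ᵐ[μ] w := by
      simpa only [show Lp.compMeasurePreserving f hf.toMeasurePreserving w = w from hw] using
        (Lp.coeFn_compMeasurePreserving w hf.toMeasurePreserving).symm
    obtain ⟨c, hc⟩ := hf.ae_eq_const_of_ae_eq_comp_ae (Lp.aestronglyMeasurable w) hinv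
    exact ⟨c, Lp.ext (hc.trans (Lp.coeFn_const 2 μ c).symm)⟩
  have hproj : (K.orthogonalProjectionOnto g : Lp E 2 μ) = Lp.const 2 μ (∫ x, g x ∂μ) := by
    refine Submodule.eq_starProjection_of_mem_of_inner_eq_zero (K := K) rfl fun w hw => ?_
    obtain ⟨c, rfl⟩ := exists_eq_const hw
    rw [real_inner_comm, inner_sub_right, inner_const, inner_const,
      integral_congr_ae (Lp.coeFn_const 2 μ _)]
    simp
  exact hproj ▸ U.toContinuousLinearMap.tendsto_birkhoffAverage_orthogonalProjection
    U.norm_toContinuousLinearMap_le g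

theorem tendstoInMeasure_birkhoffAverage (hf : Ergodic f μ) {φ : α → E} (hφ : MemLp φ 2 μ) :
    TendstoInMeasure μ (birkhoffAverage ℝ f φ) atTop fun _ => ∫ y, φ y ∂μ := by
  have hlim := tendstoInMeasure_of_tendsto_Lp
    (tendsto_birkhoffAverage_compMeasurePreservingₗᵢ hf (hφ.toLp φ))
  rw [integral_congr_ae hφ.coeFn_toLp] at hlim
  refine hlim.congr (fun n => ?_) (Lp.coeFn_const 2 μ _)
  exact (coeFn_birkhoffAverage_compMeasurePreservingₗᵢ hf.toMeasurePreserving _ n).trans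
    (hf.quasiMeasurePreserving.birkhoffAverage_ae_eq_of_ae_eq ℝ hφ.coeFn_toLp n)

end MeanErgodic

section TimeWindow

/-- The times `N` with `n ≤ N < (1 + θ) * n`: a window after time `n` whose length is a fixed
proportion `θ` of `n`, in which returns are sought. -/
noncomputable def timeWindow (θ : ℝ) (n : ℕ) : Finset ℕ :=
  Finset.Ico n ⌈(1 + θ) * n⌉₊

theorem mem_timeWindow {θ : ℝ} {n N : ℕ} :
    N ∈ timeWindow θ n ↔ n ≤ N ∧ (N : ℝ) < (1 + θ) * n := by
  rw [timeWindow, Finset.mem_Ico, Nat.lt_ceil]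

theorem card_timeWindow_le {θ : ℝ} (hθ : 0 ≤ θ) (n : ℕ) :
    ((timeWindow θ n).card : ℝ) ≤ θ * n + 1 := by
  have hle : (n : ℝ) ≤ (1 + θ) * n := le_mul_of_one_le_left n.cast_nonneg (by linarith)
  have hceil := Nat.ceil_lt_add_one (n.cast_nonneg.trans hle)
  rw [timeWindow, Nat.card_Ico, Nat.cast_sub (by exact_mod_cast hle.trans (Nat.le_ceil _))]
  linarith

theorem mul_le_of_mem_timeWindow {θ b d : ℝ} {n N : ℕ} (hN : N ∈ timeWindow θ n)
    (hd : |b| * θ ≤ d) : N * b ≤ n * (b + d) := by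
  obtain ⟨hnN, hNn⟩ := mem_timeWindow.1 hN
  have hdelay : (0 : ℝ) ≤ N - n := sub_nonneg.2 (by exact_mod_cast hnN)
  calc N * b = n * b + (N - n) * b := by ring
    _ ≤ n * b + (N - n) * |b| := by gcongr; exact le_abs_self b
    _ ≤ n * b + θ * n * |b| := by gcongr; linarith
    _ = n * (b + |b| * θ) := by ring
    _ ≤ n * (b + d) := by gcongr

variable {α : Type*} {f : α → α} {x : α}

/- Without a visit the number of visits before time `n` and before the end of the window agree,
although the visit frequencies are both close to `q`. -/
theorem exists_mem_timeWindow_iterate_mem {Q : Set α} {θ η q : ℝ} {n : ℕ} (hn : 0 < n)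
    (hθ : 0 ≤ θ) (hη : (2 + θ) * η ≤ θ * q)
    (hstart : |birkhoffAverage ℝ f (Q.indicator 1) n x - q| < η)
    (hend : |birkhoffAverage ℝ f (Q.indicator 1) ⌈(1 + θ) * n⌉₊ x - q| < η) :
    ∃ N ∈ timeWindow θ n, f^[N] x ∈ Q := by
  set n' := ⌈(1 + θ) * n⌉₊
  by_contra! hno
  have hn0 : (0 : ℝ) < n := by exact_mod_cast hn
  have hlen : (1 + θ) * n ≤ n' := Nat.le_ceil _
  have hn'0 : (0 : ℝ) < n' := by nlinarith
  have hvisits : birkhoffSum f (Q.indicator (1 : α → ℝ)) n' x =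
      birkhoffSum f (Q.indicator 1) n x := by
    have hnn' : n ≤ n' := by exact_mod_cast (le_mul_of_one_le_left hn0.le (by linarith)).trans hlen
    rw [birkhoffSum, ← Finset.sum_range_add_sum_Ico _ hnn', birkhoffSum, add_eq_left]
    exact Finset.sum_eq_zero fun N hN => Set.indicator_of_notMem (hno N hN) _
  have hη0 : 0 < η := (abs_nonneg _).trans_lt hstart
  have hηq : 0 ≤ q - η := by
    by_contra! hlt
    nlinarith
  have hupper : birkhoffSum f (Q.indicator (1 : α → ℝ)) n x < (q + η) * n := by
    rw [← div_lt_iff₀ hn0, ← inv_mul_eq_div]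
    exact sub_lt_iff_lt_add'.1 (abs_lt.1 hstart).2
  have hlower : (q - η) * n' < birkhoffSum f (Q.indicator (1 : α → ℝ)) n x := by
    rw [← lt_div_iff₀ hn'0, ← inv_mul_eq_div, ← hvisits, sub_eq_add_neg]
    exact lt_sub_iff_add_lt'.1 (abs_lt.1 hend).1
  nlinarith [mul_le_mul_of_nonneg_left hlen hηq]

variable {E : Type*} [NormedAddCommGroup E]

theorem norm_birkhoffSum_le {φ : α → E} {C : ℝ} (hC : ∀ k, ‖φ (f^[k] x)‖ ≤ C) (n : ℕ) :
    ‖birkhoffSum f φ n x‖ ≤ n * C := by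
  simpa [birkhoffSum] using norm_sum_le_of_le (Finset.range n) fun k _ => hC k

theorem norm_birkhoffAverage_le [NormedSpace ℝ E] {φ : α → E} {C : ℝ}
    (hC : ∀ k, ‖φ (f^[k] x)‖ ≤ C) (n : ℕ) : ‖birkhoffAverage ℝ f φ n x‖ ≤ C := by
  rw [birkhoffAverage, norm_smul, norm_inv, RCLike.norm_natCast]
  exact inv_mul_le_of_le_mul₀ n.cast_nonneg ((norm_nonneg _).trans (hC 0))
    (norm_birkhoffSum_le hC n)

theorem norm_birkhoffAverage_sub_le_of_mem_timeWindow [NormedSpace ℝ E] {φ : α → E} {C θ : ℝ}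
    {n N : ℕ} (hC : ∀ k, ‖φ (f^[k] x)‖ ≤ C) (hN : N ∈ timeWindow θ n) :
    ‖birkhoffAverage ℝ f φ N x - birkhoffAverage ℝ f φ n x‖ ≤ 2 * C * θ := by
  obtain ⟨hnN, hNn⟩ := mem_timeWindow.1 hN
  obtain ⟨d, rfl⟩ := Nat.exists_eq_add_of_le hnN
  have hn : (0 : ℝ) < n := by
    refine Nat.cast_pos.2 (Nat.pos_of_ne_zero ?_)
    rintro rfl
    exact hNn.not_ge (by simp)
  have hdn : (d : ℝ) < θ * n := by
    push_cast at hNn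
    linarith
  have hθ : 0 < θ := pos_of_mul_pos_left (d.cast_nonneg.trans_lt hdn) hn.le
  have hC0 : 0 ≤ C := (norm_nonneg _).trans (hC 0)
  have hsplit : birkhoffAverage ℝ f φ (n + d) x - birkhoffAverage ℝ f φ n x =
      ((n + d : ℕ) : ℝ)⁻¹ •
        (birkhoffSum f φ d (f^[n] x) - (d : ℝ) • birkhoffAverage ℝ f φ n x) := by
    rw [birkhoffAverage, birkhoffAverage, birkhoffSum_add]
    match_scalars
    all_goals field_simp
    ring
  have htail : ‖birkhoffSum f φ d (f^[n] x)‖ ≤ d * C :=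
    norm_birkhoffSum_le (fun k => by rw [← Function.iterate_add_apply]; exact hC _) d
  have hhead : ‖(d : ℝ) • birkhoffAverage ℝ f φ n x‖ ≤ d * C := by
    rw [norm_smul, RCLike.norm_natCast]
    gcongr
    exact norm_birkhoffAverage_le hC n
  calc ‖birkhoffAverage ℝ f φ (n + d) x - birkhoffAverage ℝ f φ n x‖
      ≤ ((n + d : ℕ) : ℝ)⁻¹ * (d * C + d * C) := by
        rw [hsplit, norm_smul, norm_inv, RCLike.norm_natCast]
        gcongr
        exact norm_sub_le_of_le htail hhead
    _ = 2 * C * (d / (n + d : ℕ)) := by ring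
    _ ≤ 2 * C * θ := by
        gcongr
        refine div_le_of_le_mul₀ (Nat.cast_nonneg _) hθ.le (hdn.le.trans ?_)
        gcongr

end TimeWindow

section Recurrence

variable {α E : Type*} [MeasurableSpace α] {μ : Measure α} {f : α → α}

theorem tendsto_measure_iUnion_nhds_zero {ι β : Type*} [Finite ι] {l : Filter β}
    {s : ι → β → Set α} (hs : ∀ i, Tendsto (fun b => μ (s i b)) l (𝓝 0)) :
    Tendsto (fun b => μ (⋃ i, s i b)) l (𝓝 0) := by
  have := Fintype.ofFinite ι
  refine tendsto_of_tendsto_of_tendsto_of_le_of_le tendsto_const_nhds ?_ (fun _ => zero_le)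
    fun b => measure_iUnion_fintype_le μ fun i => s i b
  simpa using tendsto_finsetSum Finset.univ fun i _ => hs i

theorem exists_measurableSet_subset_sdiff_half_le {s t : Set α} (hs : MeasurableSet s)
    (hμs : μ s ≠ ∞) (ht : μ t ≤ μ s / 2) :
    ∃ u ⊆ s \ t, MeasurableSet u ∧ μ s / 2 ≤ μ u := by
  refine ⟨s \ toMeasurable μ t, Set.sdiff_subset_sdiff_right (subset_toMeasurable μ t),
    hs.diff (measurableSet_toMeasurable μ t), ?_⟩
  calc μ s / 2 = μ s - μ s / 2 := (ENNReal.sub_half hμs).symm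
    _ ≤ μ s - μ (toMeasurable μ t) := by rw [measure_toMeasurable]; gcongr
    _ ≤ μ (s \ toMeasurable μ t) := le_measure_sdiff

theorem eventually_nhdsGT_zero_mul_lt (K : ℝ) {c : ℝ} (hc : 0 < c) :
    ∀ᶠ θ in 𝓝[>] (0 : ℝ), K * θ < c := by
  refine (Tendsto.mono_left ?_ nhdsWithin_le_nhds).eventually_lt_const hc
  exact (continuous_const_mul K).tendsto' 0 0 (mul_zero K)

variable [IsProbabilityMeasure μ]

theorem tendstoInMeasure_birkhoffAverage_indicator (hf : Ergodic f μ) {Q : Set α}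
    (hQ : MeasurableSet Q) :
    TendstoInMeasure μ (birkhoffAverage ℝ f (Q.indicator (1 : α → ℝ))) atTop
      fun _ => μ.real Q := by
  have hmem : MemLp (Q.indicator (1 : α → ℝ)) 2 μ := (memLp_const (1 : ℝ)).indicator hQ
  simpa only [integral_indicator_one hQ] using tendstoInMeasure_birkhoffAverage hf hmem

theorem tendsto_measure_forall_timeWindow_iterate_notMem (hf : Ergodic f μ) {Q : Set α}
    (hQ : MeasurableSet Q) {θ : ℝ} (hθ : 0 < θ) :
    Tendsto (fun n => μ {x ∈ Q | ∀ N ∈ timeWindow θ n, f^[N] x ∉ Q}) atTop (𝓝 0) := by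
  rcases eq_or_ne (μ Q) 0 with hQ0 | hQ0
  · simpa only [measure_mono_null (Set.sep_subset Q _) hQ0] using tendsto_const_nhds
  have hq : 0 < μ.real Q := ENNReal.toReal_pos hQ0 (measure_ne_top μ Q)
  let η := θ * μ.real Q / (2 + θ)
  let B (n : ℕ) : Set α :=
    {x | η ≤ |birkhoffAverage ℝ f (Q.indicator (1 : α → ℝ)) n x - μ.real Q|}
  have hB : Tendsto (fun n => μ (B n)) atTop (𝓝 0) :=
    tendstoInMeasure_iff_norm.1 (tendstoInMeasure_birkhoffAverage_indicator hf hQ) η (by positivity)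
  have hend : Tendsto (fun n : ℕ => ⌈(1 + θ) * n⌉₊) atTop atTop :=
    tendsto_nat_ceil_atTop.comp
      (tendsto_natCast_atTop_atTop.const_mul_atTop (by positivity : 0 < 1 + θ))
  have hbad : Tendsto (fun n : ℕ => μ (B n) + μ (B ⌈(1 + θ) * n⌉₊)) atTop (𝓝 0) := by
    simpa only [add_zero, Function.comp_def] using hB.add (hB.comp hend)
  refine tendsto_of_tendsto_of_tendsto_of_le_of_le' tendsto_const_nhds hbad
    (Eventually.of_forall fun _ => zero_le) ?_
  filter_upwards [eventually_gt_atTop 0] with n hn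
  refine (measure_mono fun x hx => ?_).trans (measure_union_le _ _)
  by_contra hxB
  simp only [Set.mem_union, B, Set.mem_ofPred_eq, not_or, not_le] at hxB
  obtain ⟨N, hN, hNQ⟩ := exists_mem_timeWindow_iterate_mem hn hθ.le
    (mul_div_cancel₀ _ (by positivity)).le hxB.1 hxB.2
  exact hx.2 N hN hNQ

variable [NormedAddCommGroup E] [InnerProductSpace ℝ E] [CompleteSpace E]

theorem eventually_tendsto_measure_exists_timeWindow_le_norm (hf : Ergodic f μ) {φ : α → E}
    (hφ : MemLp φ ∞ μ) {γ : ℝ} (hγ : 0 < γ) :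
    ∀ᶠ θ in 𝓝[>] (0 : ℝ), Tendsto (fun n => μ {x | ∃ N ∈ timeWindow θ n,
      γ ≤ ‖birkhoffAverage ℝ f φ N x - ∫ y, φ y ∂μ‖}) atTop (𝓝 0) := by
  obtain ⟨C, hC⟩ : ∃ C, ∀ᵐ x ∂μ, ‖φ x‖ ≤ C := ⟨_, ae_le_lpNorm_exponent_top hφ⟩
  have horbit : ∀ᵐ x ∂μ, ∀ k, ‖φ (f^[k] x)‖ ≤ C :=
    ae_all_iff.2 fun k => (hf.quasiMeasurePreserving.iterate k).ae hC
  refine (eventually_nhdsGT_zero_mul_lt (2 * C) (half_pos hγ)).mono fun θ hθ => ?_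
  have hmean := tendstoInMeasure_birkhoffAverage hf (hφ.mono_exponent le_top)
  have hlim : Tendsto (fun n => μ {x | γ / 2 ≤ ‖birkhoffAverage ℝ f φ n x - ∫ y, φ y ∂μ‖}) atTop
      (𝓝 0) :=
    tendstoInMeasure_iff_norm.1 hmean _ (half_pos hγ)
  refine tendsto_of_tendsto_of_tendsto_of_le_of_le tendsto_const_nhds hlim (fun _ => zero_le)
    fun n => measure_mono_ae ?_
  filter_upwards [horbit] with x hx ⟨N, hN, hγN⟩
  have hshift := norm_birkhoffAverage_sub_le_of_mem_timeWindow hx hN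
  have htri := norm_sub_le_norm_sub_add_norm_sub (birkhoffAverage ℝ f φ N x)
    (birkhoffAverage ℝ f φ n x) (∫ y, φ y ∂μ)
  change γ / 2 ≤ ‖birkhoffAverage ℝ f φ n x - ∫ y, φ y ∂μ‖
  linarith

theorem eventually_exists_half_measure_returning (hf : Ergodic f μ) {X : Set α}
    (hX : MeasurableSet X) (hX0 : μ X ≠ 0) {κ ι : Type*} [Finite κ] [Finite ι] {Q : κ → Set α}
    (hQ : ∀ p, MeasurableSet (Q p)) (hXQ : X ⊆ ⋃ p, Q p) {ψ : ι → α → E}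
    (hψ : ∀ i, MemLp (ψ i) ∞ μ) {γ : ℝ} (hγ : 0 < γ) :
    ∀ᶠ θ in 𝓝[>] (0 : ℝ), ∀ᶠ n in atTop, ∃ Z ⊆ X, MeasurableSet Z ∧ μ X / 2 ≤ μ Z ∧
      ∀ x ∈ Z, ∃ p, ∃ N ∈ timeWindow θ n, x ∈ Q p ∧ f^[N] x ∈ Q p ∧
        ∀ i, ‖birkhoffAverage ℝ f (ψ i) N x - ∫ y, ψ i y ∂μ‖ < γ := by
  filter_upwards [self_mem_nhdsWithin, eventually_all.2 fun i =>
    eventually_tendsto_measure_exists_timeWindow_le_norm hf (hψ i) hγ] with θ hθ hdev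
  have hnoret := tendsto_measure_iUnion_nhds_zero fun p =>
    tendsto_measure_forall_timeWindow_iterate_notMem hf (hQ p) hθ
  have hbad := hnoret.add (tendsto_measure_iUnion_nhds_zero hdev)
  rw [add_zero] at hbad
  filter_upwards [hbad.eventually_le_const (ENNReal.half_pos hX0)] with n hn
  obtain ⟨Z, hZ, hZm, hZμ⟩ := exists_measurableSet_subset_sdiff_half_le hX (measure_ne_top μ X)
    ((measure_union_le _ _).trans hn)
  refine ⟨Z, hZ.trans Set.sdiff_subset, hZm, hZμ, fun x hx => ?_⟩
  obtain ⟨hxX, hxbad⟩ := hZ hx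
  simp only [Set.mem_union, Set.mem_iUnion, Set.mem_ofPred_eq, not_or, not_exists, not_and, not_le,
    not_forall, not_not] at hxbad
  obtain ⟨p, hxp⟩ := Set.mem_iUnion.1 (hXQ hxX)
  obtain ⟨N, hN, hNp⟩ := hxbad.1 p hxp
  exact ⟨p, N, hN, hxp, hNp, fun i => hxbad.2 i N hN⟩

end Recurrence

section Counting

theorem eventually_mul_exp_le_exp (K θ : ℝ) {a c : ℝ} (hca : c < a) :
    ∀ᶠ n : ℕ in atTop, K * (θ * n + 1) * Real.exp (n * c) ≤ Real.exp (n * a) := by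
  have hlin : (fun x : ℝ => K * (θ * x + 1)) =o[atTop] fun x => Real.exp ((a - c) * x) := by
    have hpow (k : ℕ) := isLittleO_pow_exp_pos_mul_atTop k (sub_pos.2 hca)
    simpa using (((hpow 1).const_mul_left θ).add (hpow 0)).const_mul_left K
  filter_upwards [tendsto_natCast_atTop_atTop.eventually (hlin.bound one_pos)] with n hn
  rw [one_mul, Real.norm_of_nonneg (Real.exp_pos _).le] at hn
  calc K * (θ * n + 1) * Real.exp (n * c)
      ≤ Real.exp ((a - c) * n) * Real.exp (n * c) := by gcongr; exact (le_abs_self _).trans hn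
    _ = Real.exp (n * a) := by rw [← Real.exp_add]; ring_nf

theorem exists_subset_forall_of_card_mul_le_card {α β : Type*} {s : Finset α} {t : Finset β}
    {r : α → β → Prop} {c : ℝ} (hs : s.Nonempty) (hr : ∀ x ∈ s, ∃ b ∈ t, r x b)
    (hc : t.card * c ≤ s.card) : ∃ b ∈ t, ∃ u ⊆ s, (∀ x ∈ u, r x b) ∧ c ≤ u.card := by
  classical
  have ⟨x, hx⟩ := hs
  have ⟨b, hb, _⟩ := hr x hx
  have : Nonempty β := ⟨b⟩
  choose! F hFt hFr using hr
  obtain ⟨b, hb, hcard⟩ := Finset.exists_le_card_fiber_of_nsmul_le_card_of_maps_to hFt ⟨b, hb⟩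
    ((nsmul_eq_mul _ c).trans_le hc)
  refine ⟨b, hb, s.filter (F · = b), Finset.filter_subset _ _, fun x hx => ?_, hcard⟩
  obtain ⟨hxs, rfl⟩ := Finset.mem_filter.1 hx
  exact hFr x hxs

theorem exists_mem_timeWindow_exp_le_card {α κ : Type*} [Fintype κ] {s : Finset α}
    {r : α → κ → ℕ → Prop} {θ b d : ℝ} {n : ℕ} (hθ : 0 ≤ θ) (hbθ : |b| * θ ≤ d) (hs : s.Nonempty)
    (hr : ∀ x ∈ s, ∃ p, ∃ N ∈ timeWindow θ n, r x p N)
    (hcard : Fintype.card κ * (θ * n + 1) * Real.exp (n * (b + d)) ≤ s.card) :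
    ∃ p, ∃ N ∈ timeWindow θ n, ∃ u ⊆ s, (∀ x ∈ u, r x p N) ∧ Real.exp (N * b) ≤ u.card := by
  let labels : Finset (κ × ℕ) := Finset.univ ×ˢ timeWindow θ n
  have hlabel : ∀ x ∈ s, ∃ l ∈ labels, r x l.1 l.2 := fun x hx =>
    let ⟨p, N, hN, hx⟩ := hr x hx
    ⟨(p, N), Finset.mk_mem_product (Finset.mem_univ p) hN, hx⟩
  have hlabels : labels.card * Real.exp (n * (b + d)) ≤ s.card := by
    refine le_trans ?_ hcard
    rw [Finset.card_product, Finset.card_univ, Nat.cast_mul]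
    gcongr
    exact card_timeWindow_le hθ n
  obtain ⟨⟨p, N⟩, hpN, u, hus, hu, hucard⟩ :=
    exists_subset_forall_of_card_mul_le_card hs hlabel hlabels
  have hN : N ∈ timeWindow θ n := (Finset.mem_product.1 hpN).2
  exact ⟨p, N, hN, u, hus, hu,
    (Real.exp_le_exp.2 (mul_le_of_mem_timeWindow hN hbθ)).trans hucard⟩

end Counting

theorem birkhoffAverage_comp_self {R α E : Type*} [DivisionSemiring R] [AddCommMonoid E]
    [Module R E] (f : α → α) (g : α → E) (n : ℕ) (x : α) :
    birkhoffAverage R f (g ∘ f) n x = birkhoffAverage R f g n (f x) := by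
  simp only [birkhoffAverage, birkhoffSum, Function.comp_apply, ← Function.iterate_succ_apply',
    Function.iterate_succ_apply]

theorem integral_comp_of_measurePreserving {α β E : Type*} [MeasurableSpace α] [MeasurableSpace β]
    {μ : Measure α} {ν : Measure β} [NormedAddCommGroup E] [NormedSpace ℝ E] {f : α → β} {g : β → E}
    (hf : MeasurePreserving f μ ν) (hg : AEStronglyMeasurable g ν) :
    ∫ x, (g ∘ f) x ∂μ = ∫ y, g y ∂ν := by
  rw [← hf.map_eq] at hg ⊢
  exact (integral_map hf.aemeasurable hg).symm

theorem katok_selection_of_separated_returning_set_general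
    {M E ι : Type*} [PseudoMetricSpace M] [MeasurableSpace M] [OpensMeasurableSpace M]
    [NormedAddCommGroup E] [InnerProductSpace ℝ E] [CompleteSpace E] [Finite ι]
    {f : M → M} {μ : Measure M} [IsProbabilityMeasure μ] (hf : Ergodic f μ)
    {ψ : ι → M → E} (hψ : ∀ i, MemLp (ψ i) ∞ μ) {γ ε : ℝ} (hγ : 0 < γ) (hε : 0 < ε)
    {X : Set M} (hX : MeasurableSet X) (hXtb : TotallyBounded X) (hX0 : μ X ≠ 0)
    {ρ a b : ℝ} (hba : b < a) {N₀ : ℕ}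
    (hsep : ∀ n : ℕ, N₀ ≤ n → ∀ Z : Set M, Z ⊆ X → MeasurableSet Z → μ X / 2 ≤ μ Z →
      ∃ S : Finset M, ↑S ⊆ Z ∧ Real.exp (n * a) ≤ S.card ∧
        ∀ x ∈ S, ∀ y ∈ S, x ≠ y → ∃ j : ℕ, j < n ∧ ρ < dist (f^[j] x) (f^[j] y)) :
    ∃ N : ℕ, N₀ ≤ N ∧ ∃ p ∈ X, ∃ Y : Finset M,
      ↑Y ⊆ X ∩ Metric.ball p ε ∧
      (∀ x ∈ Y, ∀ y ∈ Y, x ≠ y → ∃ j : ℕ, j < N ∧ ρ < dist (f^[j] x) (f^[j] y)) ∧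
      (∀ y ∈ Y, f^[N] y ∈ X ∩ Metric.ball p ε) ∧
      (∀ y ∈ Y, ∀ i, ‖birkhoffAverage ℝ f (ψ i) N (f y) - ∫ x, ψ i x ∂μ‖ < γ) ∧
      Real.exp (N * b) ≤ Y.card := by
  obtain ⟨t, htX, htfin, hcover⟩ := Metric.finite_approx_of_totallyBounded hXtb ε hε
  have := htfin.fintype
  have hXQ : X ⊆ ⋃ p : t, X ∩ Metric.ball p ε := by
    rw [← Set.inter_iUnion, ← Set.biUnion_eq_iUnion t fun p _ => Metric.ball p ε]
    exact Set.subset_inter subset_rfl hcover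
  have hψf i : MemLp (ψ i ∘ f) ∞ μ := (hψ i).comp_measurePreserving hf.toMeasurePreserving
  have hψint i : ∫ y, (ψ i ∘ f) y ∂μ = ∫ y, ψ i y ∂μ :=
    integral_comp_of_measurePreserving hf.toMeasurePreserving (hψ i).1
  obtain ⟨θ, hgood, hbθ, hθ⟩ := ((eventually_exists_half_measure_returning hf hX hX0
    (fun p : t => hX.inter Metric.isOpen_ball.measurableSet) hXQ hψf hγ).and
    ((eventually_nhdsGT_zero_mul_lt |b| (half_pos (sub_pos.2 hba))).and self_mem_nhdsWithin)).exists
  obtain ⟨n, ⟨Z, hZX, hZm, hZμ, hZ⟩, hn, hexp⟩ := (hgood.and ((eventually_ge_atTop N₀).and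
    (eventually_mul_exp_le_exp (Fintype.card t) θ (by linarith : b + (a - b) / 2 < a)))).exists
  obtain ⟨S, hSZ, hScard, hSsep⟩ := hsep n hn Z hZX hZm hZμ
  have hSne : S.Nonempty := by
    rw [← Finset.card_pos, ← Nat.cast_pos (α := ℝ)]
    exact (Real.exp_pos _).trans_le hScard
  obtain ⟨p, N, hN, Y, hYS, hY, hYcard⟩ := exists_mem_timeWindow_exp_le_card (le_of_lt hθ) hbθ.le
    hSne (fun x hx => hZ x (hSZ hx)) (hexp.trans hScard)
  simp only [birkhoffAverage_comp_self, hψint] at hY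
  have hnN : n ≤ N := (mem_timeWindow.1 hN).1
  refine ⟨N, hn.trans hnN, p, htX p.2, Y, fun y hy => (hY y hy).1, fun x hx y hy hxy => ?_,
    fun y hy => (hY y hy).2.1, fun y hy => (hY y hy).2.2, hYcard⟩
  obtain ⟨j, hj, hdist⟩ := hSsep x (hYS hx) y (hYS hy) hxy
  exact ⟨j, hj.trans_le hnN, hdist⟩

/-- **Selection lemma in the proof of Katok's horseshoe theorem.**  For a homeomorphism `f`
of a compact metric space with an ergodic invariant measure `μ`, given test functions
`ψ₁,…,ψ_k`, constants `γ, δ, ε > 0`, a compact set `X` of positive measure, a separation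
scale `ρ` adapted to the `ψ_i`, and an entropy-type hypothesis producing `(n,ρ)`-separated
sets of cardinality `≥ e^{n(h−ξ)}` inside any half-measure subset of `X`, one finds a time
`N ≥ N₀`, a point `p ∈ X` and an `(N,ρ)`-separated set `Y ⊆ X ∩ B(p,ε/2)` of cardinality
`≥ e^{N(h−δ)}` that returns to `X ∩ B(p,ε/2)` at time `N` and whose Birkhoff averages over
`[1,N]` are `γ/2`-close to the space averages. -/
theorem katok_selection_of_separated_returning_set
    {M : Type*} [MetricSpace M] [CompactSpace M] [MeasurableSpace M] [BorelSpace M]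
    (f : M ≃ₜ M) (μ : Measure M) [IsProbabilityMeasure μ]
    (hinv : ∀ A : Set M, MeasurableSet A → μ (⇑f ⁻¹' A) = μ A)
    (herg : Ergodic (⇑f) μ)
    (k : ℕ) (ψ : Fin k → M → ℝ) (hψ : ∀ i, Continuous (ψ i))
    (γ δ ε : ℝ) (hγ : 0 < γ) (hδ : 0 < δ) (hε : 0 < ε)
    (X : Set M) (hXcomp : IsCompact X) (hXpos : 0 < μ X)
    (ρ : ℝ) (hρ : 0 < ρ)
    (hρψ : ∀ x y : M, dist x y < ρ → ∀ i, |ψ i x - ψ i y| < γ / 2)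
    (h ξ : ℝ) (hh : 0 ≤ h) (hξ : 0 < ξ) (hξδ : ξ * (h + 4) < δ)
    (N₀ : ℕ)
    (hsep : ∀ n : ℕ, N₀ ≤ n → ∀ Z : Set M, Z ⊆ X → MeasurableSet Z →
      μ X / 2 ≤ μ Z →
      ∃ Sfin : Finset M, ↑Sfin ⊆ Z ∧
        Real.exp (n * (h - ξ)) ≤ (Sfin.card : ℝ) ∧
        ∀ x ∈ Sfin, ∀ y ∈ Sfin, x ≠ y →
          ∃ j : ℕ, j < n ∧ ρ < dist ((⇑f)^[j] x) ((⇑f)^[j] y)) :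
    ∃ N : ℕ, N₀ ≤ N ∧ ∃ p ∈ X, ∃ Y : Finset M,
      (↑Y ⊆ X ∩ Metric.ball p (ε / 2)) ∧
      (∀ x ∈ Y, ∀ y ∈ Y, x ≠ y →
        ∃ j : ℕ, j < N ∧ ρ < dist ((⇑f)^[j] x) ((⇑f)^[j] y)) ∧
      (∀ y ∈ Y, (⇑f)^[N] y ∈ X ∩ Metric.ball p (ε / 2)) ∧
      (∀ y ∈ Y, ∀ i : Fin k,
        |(1 / N : ℝ) * ∑ j ∈ Finset.range N, ψ i ((⇑f)^[j + 1] y) - ∫ x, ψ i x ∂μ|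
          < γ / 2) ∧
      Real.exp (N * (h - δ)) ≤ (Y.card : ℝ) := by
  have hmemLp (i : Fin k) : MemLp (ψ i) ∞ μ :=
    (hψ i).memLp_top_of_hasCompactSupport (HasCompactSupport.of_compactSpace _) μ
  simpa only [birkhoffAverage, birkhoffSum, one_div, smul_eq_mul, Real.norm_eq_abs,
    Function.iterate_succ_apply] using
    katok_selection_of_separated_returning_set_general herg hmemLp (half_pos hγ) (half_pos hε)
      hXcomp.isClosed.measurableSet hXcomp.totallyBounded hXpos.ne'
      (by nlinarith : h - δ < h - ξ) hsep
end
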